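/- arXiv:1410.8198 — 4 statements merged into one kernel-verified Lean document; each statement's English description precedes it below -/
import Mathlib

section
/- There is an absolute constant c > 0 with the following property. Let k ≥ m ≥ 1 be integers with k ≥ 3. Then there exists x_0 (depending on m and k) such that for all real x ≥ x_0, with N_x = {n ∈ ℤ : −x < n ≤ x and gcd(n, ∏_{p ≤ k, p prime} p) = 1}, the number of m-tuples h ∈ N_x^m satisfying ∏_{p ≤ k, p prime} (1 − n_p(h)/p) · (1 − 1/p)^{−m} > (log 3m)^{cm} · (log log k)^{m−1} is at most |N_x|^m / (16m · C(k−1, m−1)), where C(n,r) denotes the binomial coefficient. -/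
open Filter

/-- `N_x`: the set of integers `n` with `-x < n ≤ x` that are coprime to the product
of the primes up to `k`. -/
def Nset (k : ℕ) (x : ℝ) : Set ℤ :=
  {n : ℤ | -x < (n : ℝ) ∧ (n : ℝ) ≤ x ∧
    Int.gcd n ((∏ p ∈ Finset.filter Nat.Prime (Finset.range (k + 1)), p : ℕ) : ℤ) = 1}

/-- `n_p(h)`: the number of distinct residue classes mod `p` among the entries of `h`. -/
def residCount (p : ℕ) {m : ℕ} (h : Fin m → ℤ) : ℕ :=
  (Finset.image (fun i => ((h i : ZMod p))) Finset.univ).card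

/-! Split the primes `p ≤ k` at `Y = m + ⌈log k⌉`. A prime `p ≤ Y` contributes at most
`(1 - 1/p)^(-(m - 1))` to the product, so by Mertens' theorem these primes contribute at most
`(C log Y)^(m - 1)`, which is within the allowed bound. A prime `p > Y` contributes at most
`exp ((m - n_p(h)) / (p - 1))`, so a large product forces the weighted number of coincidences
`E(h) = ∑_{Y < p ≤ k} (m - n_p(h)) / (p - 1)` to exceed a large multiple of `m`. This is rare by
Markov's inequality for `exp (E(h) log k)`: each weight `log k / (p - 1)` is at most `1`, and by the
Chinese remainder theorem the exponential moment factors over `p`. The factor at `p` is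
`1 + O(m² log k / p²)`, and these factors multiply up to at most `exp (4 m log k)`. -/

section Mertens

open Real

theorem prod_primesLE_pow_div_dvd_factorial (n : ℕ) :
    ∏ p ∈ n.primesLE, p ^ (n / p) ∣ n.factorial := by
  refine Finset.prod_dvd_of_isRelPrime (fun p hp q hq hpq => ?_) fun p hp => ?_
  · have hcoprime := (Nat.coprime_primes (Nat.prime_of_mem_primesLE hp)
      (Nat.prime_of_mem_primesLE hq)).mpr hpq
    exact Nat.coprime_iff_isRelPrime.mp (hcoprime.pow _ _)
  · rw [(Nat.prime_of_mem_primesLE hp).pow_dvd_factorial_iff (b := Nat.log p n + 2) (by lia)]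
    simpa using Finset.single_le_sum (f := fun i => n / p ^ i) (fun _ _ => Nat.zero_le _)
      (Finset.mem_Ico.mpr ⟨le_rfl, by lia⟩ : 1 ∈ Finset.Ico 1 (Nat.log p n + 2))

theorem sum_log_div_primesLE_le (n : ℕ) : ∑ p ∈ n.primesLE, log p / p ≤ 2 * log n := by
  rcases n.eq_zero_or_pos with rfl | hn
  · simp
  have hpow : ∏ p ∈ n.primesLE, (p : ℝ) ^ (n / p) ≤ (n : ℝ) ^ n := by
    exact_mod_cast (Nat.le_of_dvd n.factorial_pos (prod_primesLE_pow_div_dvd_factorial n)).trans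
      n.factorial_le_pow
  have hprime_pos : ∀ p ∈ n.primesLE, (0 : ℝ) < p := fun p hp => by
    exact_mod_cast (Nat.prime_of_mem_primesLE hp).pos
  have hfloor : ∀ p ∈ n.primesLE, (n : ℝ) / p ≤ 2 * (n / p : ℕ) := fun p hp => by
    have hlt := Nat.lt_floor_add_one ((n : ℝ) / p)
    rw [Nat.floor_div_eq_div] at hlt
    have hone : (1 : ℝ) ≤ (n / p : ℕ) := by
      exact_mod_cast Nat.div_pos (Nat.le_of_mem_primesLE hp) (Nat.prime_of_mem_primesLE hp).pos
    linarith
  have hn' : (0 : ℝ) < n := by exact_mod_cast hn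
  refine le_of_mul_le_mul_left ?_ hn'
  calc (n : ℝ) * ∑ p ∈ n.primesLE, log p / p
      = ∑ p ∈ n.primesLE, n / p * log p := by
        rw [Finset.mul_sum]
        exact Finset.sum_congr rfl fun p _ => by ring
    _ ≤ ∑ p ∈ n.primesLE, 2 * (n / p : ℕ) * log p := by
        gcongr with p hp
        exact hfloor p hp
    _ = 2 * log (∏ p ∈ n.primesLE, (p : ℝ) ^ (n / p)) := by
        rw [log_prod fun p hp => (pow_pos (hprime_pos p hp) _).ne', Finset.mul_sum]
        exact Finset.sum_congr rfl fun p _ => by rw [log_pow]; ring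
    _ ≤ 2 * log ((n : ℝ) ^ n) := by
        gcongr
        exact Finset.prod_pos fun p hp => pow_pos (hprime_pos p hp) _
    _ = n * (2 * log n) := by rw [log_pow]; ring

theorem tsum_one_div_add_one_rpow_le {s : ℝ} (hs : 1 < s) :
    ∑' n : ℕ, 1 / (n + 1 : ℝ) ^ s ≤ 1 + 1 / (s - 1) := by
  have hterm : 0 ≤ s * ZetaAsymptotics.termTSum s :=
    mul_nonneg (by linarith) (tsum_nonneg fun _ => ZetaAsymptotics.term_nonneg _ _)
  linarith [ZetaAsymptotics.zeta_limit_aux1 hs]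

theorem prod_primesLE_inv_one_sub_rpow_le {s : ℝ} (hs : 1 < s) (n : ℕ) :
    ∏ p ∈ n.primesLE, (1 - (p : ℝ) ^ (-s))⁻¹ ≤ 1 + 1 / (s - 1) := by
  let f : ℕ →* ℝ :=
    { toFun := fun j => (j : ℝ) ^ (-s)
      map_one' := by simp
      map_mul' := fun a b => by
        rw [Nat.cast_mul, mul_rpow a.cast_nonneg b.cast_nonneg] }
  have hsum : Summable f := summable_nat_rpow.mpr (by linarith)
  calc ∏ p ∈ n.primesLE, (1 - f p)⁻¹
      = ∑' j : (n + 1).smoothNumbers, f j :=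
        EulerProduct.prod_primesBelow_geometric_eq_tsum_smoothNumbers hsum (n + 1)
    _ ≤ ∑' j, f j := hsum.tsum_subtype_le f _ fun j => rpow_nonneg j.cast_nonneg _
    _ = ∑' j : ℕ, 1 / (j + 1 : ℝ) ^ s := by
        rw [hsum.tsum_eq_zero_add]
        have hzero : f 0 = 0 := by
          simp [f, zero_rpow (by linarith : -s ≠ 0)]
        rw [hzero, zero_add]
        refine tsum_congr fun j => ?_
        simp [f, rpow_neg (by positivity : (0 : ℝ) ≤ j + 1)]
    _ ≤ 1 + 1 / (s - 1) := tsum_one_div_add_one_rpow_le hs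

theorem inv_one_sub_one_div_le_exp_mul {x σ : ℝ} (hx : 2 ≤ x) (hσ : 0 ≤ σ) :
    (1 - 1 / x)⁻¹ ≤ exp (2 * σ * (log x / x)) * (1 - x ^ (-(1 + σ)))⁻¹ := by
  have hx0 : 0 < x := by linarith
  have hinv : 1 / x ≤ 1 / 2 := one_div_le_one_div_of_le two_pos hx
  set w := σ * (log x / x) with hw
  have hw0 : 0 ≤ w := mul_nonneg hσ (div_nonneg (log_nonneg (by linarith)) hx0.le)
  have hrpow : 1 / x - w ≤ x ^ (-(1 + σ)) := by
    calc 1 / x - w = 1 / x * (-(σ * log x) + 1) := by rw [hw]; ring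
      _ ≤ 1 / x * exp (-(σ * log x)) := by gcongr; exact add_one_le_exp _
      _ = x ^ (-(1 + σ)) := by
          rw [neg_add, rpow_add hx0, rpow_neg_one, one_div, rpow_def_of_pos hx0]
          ring_nf
  have hlt : x ^ (-(1 + σ)) < 1 := rpow_lt_one_of_one_lt_of_neg (by linarith) (by linarith)
  have hexp : 1 - x ^ (-(1 + σ)) ≤ exp (2 * w) * (1 - 1 / x) := by
    calc 1 - x ^ (-(1 + σ)) ≤ (2 * w + 1) * (1 - 1 / x) := by nlinarith
      _ ≤ exp (2 * w) * (1 - 1 / x) := by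
          gcongr
          · linarith
          · exact add_one_le_exp _
  rw [mul_assoc 2 σ, ← hw, ← div_eq_mul_inv, inv_eq_one_div,
    div_le_div_iff₀ (by linarith) (by linarith), one_mul]
  exact hexp

theorem one_le_inv_one_sub_one_div {x : ℝ} (hx : 1 < x) : 1 ≤ (1 - 1 / x)⁻¹ := by
  have hlt : 1 / x < 1 := (div_lt_one (by linarith)).mpr hx
  have hpos : 0 < 1 / x := by positivity
  exact (one_le_inv₀ (by linarith)).mpr (by linarith)

-- Rankin's trick: compare with the Euler product of `ζ` at `1 + 1 / log n`.
theorem prod_primesLE_inv_one_sub_one_div_le {n : ℕ} (hn : 2 ≤ n) :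
    ∏ p ∈ n.primesLE, (1 - 1 / (p : ℝ))⁻¹ ≤ 3 * exp 4 * log n := by
  have hlog : 1 / 2 < log n :=
    lt_of_lt_of_le (by linarith [log_two_gt_d9])
      (log_le_log two_pos (by exact_mod_cast hn : (2 : ℝ) ≤ n))
  set σ : ℝ := 1 / log n with hσ
  have hσ0 : 0 < σ := by positivity
  have hone_lt : ∀ p ∈ n.primesLE, (1 : ℝ) < p := fun p hp => by
    exact_mod_cast Nat.one_lt_of_mem_primesLE hp
  calc ∏ p ∈ n.primesLE, (1 - 1 / (p : ℝ))⁻¹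
      ≤ ∏ p ∈ n.primesLE, (exp (2 * σ * (log p / p)) * (1 - (p : ℝ) ^ (-(1 + σ)))⁻¹) :=
        Finset.prod_le_prod
          (fun p hp => zero_le_one.trans (one_le_inv_one_sub_one_div (hone_lt p hp)))
          fun p hp => inv_one_sub_one_div_le_exp_mul
            (by exact_mod_cast Nat.two_le_of_mem_primesLE hp) hσ0.le
    _ = exp (2 * σ * ∑ p ∈ n.primesLE, log p / p) *
        ∏ p ∈ n.primesLE, (1 - (p : ℝ) ^ (-(1 + σ)))⁻¹ := by
        rw [Finset.prod_mul_distrib, Finset.mul_sum, exp_sum]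
    _ ≤ exp (2 * σ * (2 * log n)) * (1 + 1 / ((1 + σ) - 1)) := by
        gcongr
        · refine Finset.prod_nonneg fun p hp => inv_nonneg.mpr ?_
          linarith [rpow_lt_one_of_one_lt_of_neg (hone_lt p hp) (by linarith : -(1 + σ) < 0)]
        · exact sum_log_div_primesLE_le n
        · exact prod_primesLE_inv_one_sub_rpow_le (by linarith) n
    _ = exp 4 * (1 + log n) := by
        have hmul : 2 * σ * (2 * log n) = 4 := by rw [hσ]; field_simp; norm_num
        rw [hmul, add_sub_cancel_left, hσ, one_div_one_div]
    _ ≤ 3 * exp 4 * log n := by nlinarith [exp_pos 4]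

end Mertens

section Tuples

theorem sum_pow_sub_card_insert_le {α : Type*} [DecidableEq α] (U : Finset α) {w : ℝ}
    (hw : 1 ≤ w) {s : Finset α} {m : ℕ} (hs : s.card ≤ m) :
    ∑ a ∈ U, w ^ (m + 1 - (insert a s).card) ≤ w ^ (m - s.card) * (U.card + m * (w - 1)) := by
  have hterm : ∀ a ∈ U, w ^ (m + 1 - (insert a s).card) =
      w ^ (m - s.card) * (1 + if a ∈ s then w - 1 else 0) := by
    intro a _
    split_ifs with ha
    · rw [Finset.insert_eq_of_mem ha, Nat.sub_add_comm hs, pow_succ]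
      ring
    · rw [Finset.card_insert_of_notMem ha, Nat.add_sub_add_right]
      ring
  have hcard : {a ∈ U | a ∈ s}.card ≤ m :=
    (Finset.card_le_card fun a ha => (Finset.mem_filter.mp ha).2).trans hs
  have : 0 ≤ w - 1 := sub_nonneg.mpr hw
  rw [Finset.sum_congr rfl hterm, ← Finset.mul_sum, Finset.sum_add_distrib, ← Finset.sum_filter]
  simp only [Finset.sum_const, nsmul_eq_mul, mul_one]
  gcongr

-- Draw the entries one at a time: at the `i`-th step at most `i` values are already taken.
theorem sum_pow_sub_card_image_le {α : Type*} [DecidableEq α] (U : Finset α) {w : ℝ}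
    (hw : 1 ≤ w) (m : ℕ) :
    ∑ v ∈ Fintype.piFinset (fun _ : Fin m => U), w ^ (m - (Finset.univ.image v).card) ≤
      ∏ i ∈ Finset.range m, (U.card + i * (w - 1)) := by
  have : 0 ≤ w - 1 := sub_nonneg.mpr hw
  induction m with
  | zero => simp
  | succ m ih =>
    have hcons : Fintype.piFinset (fun _ : Fin (m + 1) => U) =
        (U ×ˢ Fintype.piFinset fun _ : Fin m => U).map
          (Fin.consEquiv fun _ => α).toEmbedding := by
      simpa using! Finset.filter_piFinset_eq_map_consEquiv
        (fun _ : Fin (m + 1) => U) fun _ => True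
    have himage : ∀ (a : α) (v : Fin m → α),
        Finset.univ.image (Fin.consEquiv (fun _ => α) (a, v)) =
          insert a (Finset.univ.image v) := by
      intro a v
      ext b
      simp [Fin.exists_fin_succ, eq_comm]
    rw [hcons, Finset.sum_map, Finset.sum_product_right, Finset.prod_range_succ]
    calc _ ≤ ∑ v ∈ Fintype.piFinset (fun _ : Fin m => U),
          w ^ (m - (Finset.univ.image v).card) * (U.card + m * (w - 1)) := by
          refine Finset.sum_le_sum fun v _ => ?_
          simp only [Equiv.coe_toEmbedding, himage]
          exact sum_pow_sub_card_insert_le U hw (by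
            simpa using Finset.card_image_le (s := Finset.univ) (f := v))
      _ ≤ _ := by
          rw [← Finset.sum_mul]
          gcongr

theorem sum_piFinset_prod_comp_le {α ι κ : Type*} [Fintype ι] [Fintype κ] [DecidableEq κ]
    {β : ι → Type*} [∀ i, DecidableEq (β i)] {A : Finset α} {B : ∀ i, Finset (β i)}
    {f : ∀ i, α → β i} (hf : ∀ i, ∀ a ∈ A, f i a ∈ B i) {Q : ℝ}
    (hQ : ∀ r : ∀ i, β i, ({a ∈ A | ∀ i, f i a = r i}.card : ℝ) ≤ Q)
    {F : ∀ i, (κ → β i) → ℝ} (hF : ∀ i v, 0 ≤ F i v) :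
    ∑ h ∈ Fintype.piFinset (fun _ : κ => A), ∏ i, F i (f i ∘ h) ≤
      Q ^ Fintype.card κ * ∏ i, ∑ v ∈ Fintype.piFinset (fun _ : κ => B i), F i v := by
  classical
  set T := Fintype.piFinset fun i => Fintype.piFinset fun _ : κ => B i
  let R : (κ → α) → ∀ i, κ → β i := fun h i => f i ∘ h
  have hmaps : ∀ h ∈ Fintype.piFinset (fun _ : κ => A), R h ∈ T := fun h hh =>
    Fintype.mem_piFinset.mpr fun i => Fintype.mem_piFinset.mpr fun j =>
      hf i _ (Fintype.mem_piFinset.mp hh j)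
  have hfiber : ∀ r : ∀ i, κ → β i,
      ({h ∈ Fintype.piFinset (fun _ : κ => A) | R h = r}.card : ℝ) ≤ Q ^ Fintype.card κ := by
    intro r
    have hsub : {h ∈ Fintype.piFinset (fun _ : κ => A) | R h = r} ⊆
        Fintype.piFinset fun j => {a ∈ A | ∀ i, f i a = r i j} := by
      intro h hh
      obtain ⟨hA, rfl⟩ := Finset.mem_filter.mp hh
      exact Fintype.mem_piFinset.mpr fun j =>
        Finset.mem_filter.mpr ⟨Fintype.mem_piFinset.mp hA j, fun _ => rfl⟩
    have hcard := Finset.card_le_card hsub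
    rw [Fintype.card_piFinset] at hcard
    calc _ ≤ ∏ j, ({a ∈ A | ∀ i, f i a = r i j}.card : ℝ) := by exact_mod_cast hcard
      _ ≤ ∏ _j : κ, Q := Finset.prod_le_prod (fun _ _ => Nat.cast_nonneg _)
          fun j _ => hQ fun i => r i j
      _ = Q ^ Fintype.card κ := by simp
  calc ∑ h ∈ Fintype.piFinset (fun _ : κ => A), ∏ i, F i (R h i)
      = ∑ r ∈ T, ∑ h ∈ Fintype.piFinset (fun _ : κ => A) with R h = r, ∏ i, F i (R h i) :=
        (Finset.sum_fiberwise_of_maps_to hmaps _).symm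
    _ ≤ ∑ r ∈ T, Q ^ Fintype.card κ * ∏ i, F i (r i) := by
        refine Finset.sum_le_sum fun r _ => ?_
        rw [Finset.sum_congr rfl fun h hh => by rw [(Finset.mem_filter.mp hh).2],
          Finset.sum_const, nsmul_eq_mul]
        exact mul_le_mul_of_nonneg_right (hfiber r) (Finset.prod_nonneg fun i _ => hF i _)
    _ = _ := by rw [← Finset.mul_sum, Finset.prod_univ_sum]

end Tuples

section CoprimeInterval

theorem abs_card_Ioc_filter_modEq_sub_le {a b : ℤ} (hab : a ≤ b) {r : ℕ} (hr : 0 < r) (v : ℤ) :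
    |({n ∈ Finset.Ioc a b | n ≡ v [ZMOD r]}.card : ℝ) - (b - a) / r| ≤ 1 := by
  have hcount := Int.Ioc_filter_modEq_card a b (by exact_mod_cast hr : (0 : ℤ) < r) v
  have hle : ⌊((a : ℚ) - v) / ((r : ℤ) : ℚ)⌋ ≤ ⌊((b : ℚ) - v) / ((r : ℤ) : ℚ)⌋ := by
    gcongr
  rw [max_eq_left (sub_nonneg.mpr hle)] at hcount
  have habs : |({n ∈ Finset.Ioc a b | n ≡ v [ZMOD r]}.card : ℚ) - (b - a) / r| ≤ 1 := by
    have hcast : ({n ∈ Finset.Ioc a b | n ≡ v [ZMOD r]}.card : ℚ) =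
        ⌊((b : ℚ) - v) / ((r : ℤ) : ℚ)⌋ - ⌊((a : ℚ) - v) / ((r : ℤ) : ℚ)⌋ := by
      exact_mod_cast hcount
    have hdiv : (b - a : ℚ) / r = (b - v) / ((r : ℤ) : ℚ) - (a - v) / ((r : ℤ) : ℚ) := by
      rw [← sub_div, Int.cast_natCast]
      ring
    rw [hcast, hdiv, abs_le]
    constructor <;>
      linarith [Int.floor_le (((b : ℚ) - v) / ((r : ℤ) : ℚ)),
        Int.lt_floor_add_one (((b : ℚ) - v) / ((r : ℤ) : ℚ)),
        Int.floor_le (((a : ℚ) - v) / ((r : ℤ) : ℚ)),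
        Int.lt_floor_add_one (((a : ℚ) - v) / ((r : ℤ) : ℚ))]
  exact_mod_cast habs

/-- The integers in `(a, b]` coprime to `P`. -/
noncomputable def coprimeIoc (a b : ℤ) (P : ℕ) : Finset ℤ := {n ∈ Finset.Ioc a b | Int.gcd n P = 1}

theorem totient_mul_le_card_coprimeIoc {a b : ℤ} (hab : a ≤ b) {P : ℕ} (hP : 0 < P) :
    (P.totient : ℝ) * ((b - a) / P - 1) ≤ (coprimeIoc a b P).card := by
  set V := {v ∈ Finset.range P | P.Coprime v}
  let C : ℕ → Finset ℤ := fun v => {n ∈ Finset.Ioc a b | n ≡ v [ZMOD P]}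
  have hsub : V.biUnion C ⊆ coprimeIoc a b P := by
    intro n hn
    obtain ⟨v, hv, hnC⟩ := Finset.mem_biUnion.mp hn
    obtain ⟨hnab, hmod⟩ := Finset.mem_filter.mp hnC
    refine Finset.mem_filter.mpr ⟨hnab, ?_⟩
    rw [← Int.gcd_emod, hmod, Int.gcd_emod, Int.gcd_natCast_natCast]
    exact (Finset.mem_filter.mp hv).2.symm
  have hdisj : (V : Set ℕ).PairwiseDisjoint C := by
    intro u hu v hv huv
    refine Finset.disjoint_left.mpr fun n hnu hnv => huv ?_
    have hmod : u ≡ v [MOD P] := Int.natCast_modEq_iff.mp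
      ((Finset.mem_filter.mp hnu).2.symm.trans (Finset.mem_filter.mp hnv).2)
    exact hmod.eq_of_lt_of_lt (Finset.mem_range.mp (Finset.mem_filter.mp hu).1)
      (Finset.mem_range.mp (Finset.mem_filter.mp hv).1)
  have hcard := Finset.card_le_card hsub
  rw [Finset.card_biUnion hdisj] at hcard
  calc (P.totient : ℝ) * ((b - a) / P - 1)
      = ∑ v ∈ V, ((b - a : ℝ) / P - 1) := by
        rw [Finset.sum_const, nsmul_eq_mul, Nat.totient]
    _ ≤ ∑ v ∈ V, ((C v).card : ℝ) := Finset.sum_le_sum fun v _ => by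
        linarith [(abs_le.mp (abs_card_Ioc_filter_modEq_sub_le hab hP v)).1]
    _ ≤ (coprimeIoc a b P).card := by exact_mod_cast hcard

theorem card_filter_forall_intCast_eq_le {a b : ℤ} (hab : a ≤ b) {S : Finset ℕ}
    (hS : ∀ p ∈ S, p.Prime) (P : ℕ) (r : ∀ p : S, ZMod p) :
    ({n ∈ coprimeIoc a b P | ∀ p : S, (n : ZMod p) = r p}.card : ℝ) ≤
      (b - a) / (∏ p ∈ S, p : ℕ) + 1 := by
  have hpos : 0 < ∏ p ∈ S, p := Finset.prod_pos fun p hp => (hS p hp).pos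
  rcases Finset.eq_empty_or_nonempty {n ∈ coprimeIoc a b P | ∀ p : S, (n : ZMod p) = r p}
    with hempty | ⟨v, hv⟩
  · have : (0 : ℝ) ≤ b - a := sub_nonneg.mpr (by exact_mod_cast hab)
    rw [hempty, Finset.card_empty, Nat.cast_zero]
    positivity
  · have hsub : {n ∈ coprimeIoc a b P | ∀ p : S, (n : ZMod p) = r p} ⊆
        {n ∈ Finset.Ioc a b | n ≡ v [ZMOD (∏ p ∈ S, p : ℕ)]} := by
      intro n hn
      obtain ⟨hnA, hnr⟩ := Finset.mem_filter.mp hn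
      refine Finset.mem_filter.mpr ⟨(Finset.mem_filter.mp hnA).1, Int.modEq_iff_dvd.mpr ?_⟩
      rw [Nat.cast_prod]
      refine Finset.prod_dvd_of_coprime (fun p hp q hq hpq => ?_) fun p hp => ?_
      · exact Nat.isCoprime_iff_coprime.mpr ((Nat.coprime_primes (hS p hp) (hS q hq)).mpr hpq)
      · exact ((ZMod.intCast_eq_intCast_iff _ _ _).mp ((hnr ⟨p, hp⟩).trans
          ((Finset.mem_filter.mp hv).2 ⟨p, hp⟩).symm)).dvd
    have hcard : (_ : ℝ) ≤ _ := Nat.cast_le.mpr (Finset.card_le_card hsub)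
    linarith [(abs_le.mp (abs_card_Ioc_filter_modEq_sub_le hab hpos v)).2]

theorem totient_prod_primes {S : Finset ℕ} (hS : ∀ p ∈ S, p.Prime) :
    (∏ p ∈ S, p).totient = ∏ p ∈ S, (p - 1) := by
  induction S using Finset.induction_on with
  | empty => simp
  | insert p S hp ih =>
    obtain ⟨hprime, hS⟩ := Finset.forall_mem_insert _ _ _ |>.mp hS
    have hcoprime : p.Coprime (∏ q ∈ S, q) := Nat.Coprime.prod_right fun q hq =>
      (Nat.coprime_primes hprime (hS q hq)).mpr fun h => hp (h ▸ hq)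
    rw [Finset.prod_insert hp, Finset.prod_insert hp, Nat.totient_mul hcoprime,
      Nat.totient_prime hprime, ih hS]

theorem coe_coprimeIoc_floor (k : ℕ) (x : ℝ) :
    (coprimeIoc ⌊-x⌋ ⌊x⌋ (primorial k) : Set ℤ) = Nset k x := by
  ext n
  simp [coprimeIoc, Nset, primorial, Int.floor_lt, Int.le_floor, and_assoc]

end CoprimeInterval

section ExponentialMoment

theorem intCast_ne_zero_of_mem_coprimeIoc {a b n : ℤ} {p P : ℕ} (hp : p.Prime) (hpP : p ∣ P)
    (hn : n ∈ coprimeIoc a b P) : (n : ZMod p) ≠ 0 := by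
  intro h0
  have hdvd : (p : ℤ) ∣ Int.gcd n P := Int.dvd_coe_gcd
    ((ZMod.intCast_zmod_eq_zero_iff_dvd _ _).mp h0) (by exact_mod_cast hpP)
  rw [(Finset.mem_filter.mp hn).2] at hdvd
  exact hp.not_dvd_one (by exact_mod_cast hdvd)

theorem sum_piFinset_erase_zero_pow_sub_card_image_le {p : ℕ} [Fact p.Prime] {w : ℝ}
    (hw : 1 ≤ w) (m : ℕ) :
    ∑ v ∈ Fintype.piFinset (fun _ : Fin m => (Finset.univ.erase 0 : Finset (ZMod p))),
        w ^ (m - (Finset.univ.image v).card) ≤ (p - 1 + m * (w - 1)) ^ m := by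
  have hcard : ((Finset.univ.erase 0 : Finset (ZMod p)).card : ℝ) = p - 1 := by
    rw [Finset.card_erase_of_mem (Finset.mem_univ _), Finset.card_univ, ZMod.card,
      Nat.cast_pred (Fact.out : p.Prime).pos]
  have hp : (0 : ℝ) ≤ p - 1 := hcard ▸ Nat.cast_nonneg _
  have : 0 ≤ w - 1 := sub_nonneg.mpr hw
  calc _ ≤ ∏ i ∈ Finset.range m, ((p : ℝ) - 1 + i * (w - 1)) :=
        hcard ▸ sum_pow_sub_card_image_le _ hw m
    _ ≤ ∏ _i ∈ Finset.range m, ((p : ℝ) - 1 + m * (w - 1)) := by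
        gcongr with i hi
        exact (Finset.mem_range.mp hi).le
    _ = _ := by rw [Finset.prod_const, Finset.card_range]

-- By the Chinese remainder theorem the reductions of a tuple modulo the primes of `S` behave
-- essentially independently.
theorem sum_prod_pow_sub_residCount_le {a b : ℤ} (hab : a ≤ b) {S : Finset ℕ}
    (hS : ∀ p ∈ S, p.Prime) {w : ℕ → ℝ} (hw : ∀ p ∈ S, 1 ≤ w p) (m : ℕ) :
    ∑ h ∈ Fintype.piFinset (fun _ : Fin m => coprimeIoc a b (∏ p ∈ S, p)),
        ∏ p ∈ S, w p ^ (m - residCount p h) ≤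
      ((b - a : ℝ) / (∏ p ∈ S, p : ℕ) + 1) ^ m * ∏ p ∈ S, (p - 1 + m * (w p - 1)) ^ m := by
  have hprime : ∀ p : S, Fact (p : ℕ).Prime := fun p => ⟨hS p p.2⟩
  set A := coprimeIoc a b (∏ p ∈ S, p)
  set Q := (b - a : ℝ) / (∏ p ∈ S, p : ℕ) + 1
  have hQ : 0 ≤ Q := add_nonneg (div_nonneg (sub_nonneg.mpr (by exact_mod_cast hab))
    (Nat.cast_nonneg _)) zero_le_one
  let B (p : S) : Finset (ZMod p) := Finset.univ.erase 0
  have hB : ∀ p : S, ∀ n ∈ A, (n : ZMod p) ∈ B p := fun p n hn =>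
    Finset.mem_erase.mpr ⟨intCast_ne_zero_of_mem_coprimeIoc (hS p p.2)
      (Finset.dvd_prod_of_mem (fun q => q) p.2) hn, Finset.mem_univ _⟩
  let F (p : S) (v : Fin m → ZMod p) : ℝ := w p ^ (m - (Finset.univ.image v).card)
  have hF : ∀ p v, 0 ≤ F p v := fun p _ => pow_nonneg (zero_le_one.trans (hw p p.2)) _
  calc ∑ h ∈ Fintype.piFinset (fun _ : Fin m => A), ∏ p ∈ S, w p ^ (m - residCount p h)
      = ∑ h ∈ Fintype.piFinset (fun _ : Fin m => A), ∏ p : S, F p ((↑) ∘ h) :=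
        Finset.sum_congr rfl fun h _ =>
          (Finset.prod_coe_sort S fun p => w p ^ (m - residCount p h)).symm
    _ ≤ Q ^ Fintype.card (Fin m) *
        ∏ p : S, ∑ v ∈ Fintype.piFinset (fun _ : Fin m => B p), F p v :=
        sum_piFinset_prod_comp_le hB (card_filter_forall_intCast_eq_le hab hS _) hF
    _ ≤ Q ^ m * ∏ p : S, ((p : ℕ) - 1 + m * (w p - 1)) ^ m := by
        rw [Fintype.card_fin]
        gcongr with p
        · exact fun p _ => Finset.sum_nonneg fun v _ => hF p v
        · exact sum_piFinset_erase_zero_pow_sub_card_image_le (hw p p.2) m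
    _ = _ := by rw [Finset.prod_coe_sort S fun p => ((p : ℝ) - 1 + m * (w p - 1)) ^ m]

theorem add_mul_exp_sub_one_le {x c u : ℝ} (hx : 0 < x) (hc : 0 ≤ c) (hu : 0 ≤ u) (hu1 : u ≤ 1) :
    x + c * (Real.exp u - 1) ≤ x * Real.exp (2 * c * (u / x)) := by
  have hexp : Real.exp u - 1 ≤ 2 * u := by
    simpa only [abs_of_nonneg hu] using
      (le_abs_self _).trans (Real.abs_exp_sub_one_le (x := u) (by rwa [abs_of_nonneg hu]))
  calc x + c * (Real.exp u - 1) ≤ x + c * (2 * u) := by gcongr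
    _ = x * (2 * c * (u / x) + 1) := by field_simp; ring
    _ ≤ x * Real.exp (2 * c * (u / x)) := by gcongr; exact Real.add_one_le_exp _

theorem residCount_le (p : ℕ) {m : ℕ} (h : Fin m → ℤ) : residCount p h ≤ m :=
  Finset.card_image_le.trans_eq (Finset.card_fin m)

theorem sum_exp_sum_mul_sub_residCount_le {a b : ℤ} (hab : a ≤ b) {S : Finset ℕ}
    (hS : ∀ p ∈ S, p.Prime) {u : ℕ → ℝ} (hu : ∀ p ∈ S, 0 ≤ u p) (hu1 : ∀ p ∈ S, u p ≤ 1)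
    (m : ℕ) :
    ∑ h ∈ Fintype.piFinset (fun _ : Fin m => coprimeIoc a b (∏ p ∈ S, p)),
        Real.exp (∑ p ∈ S, (m - residCount p h) * u p) ≤
      (((b - a : ℝ) / (∏ p ∈ S, p : ℕ) + 1) * (∏ p ∈ S, p).totient) ^ m *
        Real.exp (2 * m ^ 2 * ∑ p ∈ S, u p / (p - 1)) := by
  have hone_lt : ∀ p ∈ S, (0 : ℝ) < p - 1 := fun p hp =>
    sub_pos.mpr (by exact_mod_cast (hS p hp).one_lt)
  have htotient : ((∏ p ∈ S, p).totient : ℝ) = ∏ p ∈ S, ((p : ℝ) - 1) := by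
    rw [totient_prod_primes hS, Nat.cast_prod]
    exact Finset.prod_congr rfl fun p hp => Nat.cast_pred (hS p hp).pos
  have hfactor : ∀ p ∈ S, 0 ≤ (p : ℝ) - 1 + m * (Real.exp (u p) - 1) := fun p hp =>
    add_nonneg (hone_lt p hp).le
      (mul_nonneg m.cast_nonneg (sub_nonneg.mpr (Real.one_le_exp (hu p hp))))
  have : (0 : ℝ) ≤ b - a := sub_nonneg.mpr (by exact_mod_cast hab)
  calc _ = ∑ h ∈ Fintype.piFinset (fun _ : Fin m => coprimeIoc a b (∏ p ∈ S, p)),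
        ∏ p ∈ S, Real.exp (u p) ^ (m - residCount p h) := by
        refine Finset.sum_congr rfl fun h _ => ?_
        rw [Real.exp_sum]
        refine Finset.prod_congr rfl fun p _ => ?_
        rw [← Real.exp_nat_mul, Nat.cast_sub (residCount_le p h)]
    _ ≤ ((b - a : ℝ) / (∏ p ∈ S, p : ℕ) + 1) ^ m *
        ∏ p ∈ S, (p - 1 + m * (Real.exp (u p) - 1)) ^ m :=
        sum_prod_pow_sub_residCount_le hab hS (fun p hp => Real.one_le_exp (hu p hp)) m
    _ ≤ ((b - a : ℝ) / (∏ p ∈ S, p : ℕ) + 1) ^ m *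
        ∏ p ∈ S, ((p - 1) * Real.exp (2 * m * (u p / (p - 1)))) ^ m := by
        gcongr with p hp
        · exact fun p hp => pow_nonneg (hfactor p hp) m
        · exact hfactor p hp
        · exact add_mul_exp_sub_one_le (hone_lt p hp) m.cast_nonneg (hu p hp) (hu1 p hp)
    _ = _ := by
        rw [Finset.prod_pow, Finset.prod_mul_distrib, ← Real.exp_sum, ← Finset.mul_sum, mul_pow,
          ← Real.exp_nat_mul, htotient, mul_pow]
        ring_nf

end ExponentialMoment

section SingularSeries

open Real

theorem residCount_pos {m : ℕ} (hm : 1 ≤ m) (p : ℕ) (h : Fin m → ℤ) : 1 ≤ residCount p h :=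
  Finset.card_pos.mpr ⟨_, Finset.mem_image_of_mem _ (Finset.mem_univ ⟨0, hm⟩)⟩

theorem residCount_le_modulus {m p : ℕ} (hp : p ≠ 0) (h : Fin m → ℤ) : residCount p h ≤ p := by
  have : NeZero p := ⟨hp⟩
  exact (Finset.card_le_univ _).trans_eq (ZMod.card p)

/-- The singular series of the tuple `h`, truncated to the primes up to `k`. -/
noncomputable def truncatedSingularSeries (k : ℕ) {m : ℕ} (h : Fin m → ℤ) : ℝ :=
  ∏ p ∈ k.primesLE, (1 - (residCount p h : ℝ) / p) / (1 - 1 / (p : ℝ)) ^ m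

/-- The number of coincidences among the entries of `h` modulo the primes in `(Y, k]`, a prime `p`
being weighted by `1 / (p - 1)`. It controls the contribution of these primes to
`truncatedSingularSeries k h`. -/
noncomputable def largePrimeExcess (Y k : ℕ) {m : ℕ} (h : Fin m → ℤ) : ℝ :=
  ∑ p ∈ k.primesLE with Y < p, ((m : ℝ) - residCount p h) / (p - 1)

theorem one_sub_div_div_one_sub_pow_le {x : ℝ} (hx : 1 < x) {n m : ℕ} (hn : n ≤ m) :
    (1 - n / x) / (1 - 1 / x) ^ m ≤ ((1 - 1 / x)⁻¹) ^ (m - n) := by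
  have hinv : 1 / x < 1 := (div_lt_one (by linarith)).mpr hx
  have hpos : 0 < 1 - 1 / x := by linarith
  obtain ⟨d, rfl⟩ := Nat.exists_eq_add_of_le hn
  rw [div_le_iff₀ (by positivity)]
  calc 1 - n / x = 1 + n * -(1 / x) := by ring
    _ ≤ (1 + -(1 / x)) ^ n := one_add_mul_le_pow (by linarith) n
    _ = ((1 - 1 / x)⁻¹) ^ (n + d - n) * (1 - 1 / x) ^ (n + d) := by
        rw [Nat.add_sub_cancel_left, pow_add, inv_pow, mul_left_comm,
          inv_mul_cancel₀ (pow_pos hpos d).ne', mul_one, ← sub_eq_add_neg]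

theorem inv_one_sub_one_div_le_exp {x : ℝ} (hx : 1 < x) : (1 - 1 / x)⁻¹ ≤ exp (1 / (x - 1)) := by
  have : x - 1 ≠ 0 := by linarith
  calc (1 - 1 / x)⁻¹ = 1 / (x - 1) + 1 := by field_simp; ring
    _ ≤ exp (1 / (x - 1)) := add_one_le_exp _

theorem one_sub_residCount_div_div_le {m p : ℕ} (hp : p.Prime) (hm : 1 ≤ m) (h : Fin m → ℤ)
    (Y : ℕ) :
    (1 - (residCount p h : ℝ) / p) / (1 - 1 / (p : ℝ)) ^ m ≤
      (if p ≤ Y then ((1 - 1 / (p : ℝ))⁻¹) ^ (m - 1) else 1) *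
        if Y < p then exp (((m : ℝ) - residCount p h) / (p - 1)) else 1 := by
  have hp1 : (1 : ℝ) < p := by exact_mod_cast hp.one_lt
  have hone := one_le_inv_one_sub_one_div hp1
  refine (one_sub_div_div_one_sub_pow_le hp1 (residCount_le p h)).trans ?_
  rcases le_or_gt p Y with hpY | hpY
  · rw [if_pos hpY, if_neg hpY.not_gt, mul_one]
    exact pow_le_pow_right₀ hone (Nat.sub_le_sub_left (residCount_pos hm p h) m)
  · rw [if_neg hpY.not_ge, if_pos hpY, one_mul, ← Nat.cast_sub (residCount_le p h),
      div_eq_mul_one_div ((m - residCount p h : ℕ) : ℝ), exp_nat_mul]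
    gcongr
    exact inv_one_sub_one_div_le_exp hp1

theorem truncatedSingularSeries_le {m : ℕ} (hm : 1 ≤ m) (Y k : ℕ) (h : Fin m → ℤ) :
    truncatedSingularSeries k h ≤
      (∏ p ∈ Y.primesLE, (1 - 1 / (p : ℝ))⁻¹) ^ (m - 1) * exp (largePrimeExcess Y k h) := by
  have hone : ∀ {n p : ℕ}, p ∈ n.primesLE → 1 ≤ (1 - 1 / (p : ℝ))⁻¹ := fun hp =>
    one_le_inv_one_sub_one_div (by exact_mod_cast Nat.one_lt_of_mem_primesLE hp)
  have hnonneg : ∀ p ∈ k.primesLE,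
      0 ≤ (1 - (residCount p h : ℝ) / p) / (1 - 1 / (p : ℝ)) ^ m := fun p hp => by
    have hprime := Nat.prime_of_mem_primesLE hp
    refine div_nonneg (sub_nonneg.mpr ?_)
      (pow_nonneg (inv_nonneg.mp (zero_le_one.trans (hone hp))) m)
    exact (div_le_one (by exact_mod_cast hprime.pos)).mpr
      (by exact_mod_cast residCount_le_modulus hprime.ne_zero h)
  have hsub : {p ∈ k.primesLE | p ≤ Y} ⊆ Y.primesLE := fun p hp =>
    Nat.mem_primesLE.mpr ⟨(Finset.mem_filter.mp hp).2,
      Nat.prime_of_mem_primesLE (Finset.mem_filter.mp hp).1⟩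
  calc truncatedSingularSeries k h
      ≤ ∏ p ∈ k.primesLE, ((if p ≤ Y then ((1 - 1 / (p : ℝ))⁻¹) ^ (m - 1) else 1) *
          if Y < p then exp (((m : ℝ) - residCount p h) / (p - 1)) else 1) :=
        Finset.prod_le_prod hnonneg fun p hp =>
          one_sub_residCount_div_div_le (Nat.prime_of_mem_primesLE hp) hm h Y
    _ = (∏ p ∈ k.primesLE with p ≤ Y, (1 - 1 / (p : ℝ))⁻¹) ^ (m - 1) *
          exp (largePrimeExcess Y k h) := by
        rw [Finset.prod_mul_distrib, ← Finset.prod_filter, ← Finset.prod_filter, Finset.prod_pow,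
          largePrimeExcess, exp_sum]
    _ ≤ _ := by
        have hprod_nonneg : ∀ p ∈ {p ∈ k.primesLE | p ≤ Y}, 0 ≤ (1 - 1 / (p : ℝ))⁻¹ := fun p hp =>
          zero_le_one.trans (hone (hsub hp))
        gcongr ?_ ^ _ * _
        · exact Finset.prod_nonneg hprod_nonneg
        · exact Finset.prod_le_prod_of_subset_of_one_le hsub hprod_nonneg fun p hp _ => hone hp

theorem one_lt_log_three : 1 < log 3 := (lt_log_iff_exp_lt three_pos).mpr exp_one_lt_three

theorem log_three_le_log_three_mul {m : ℕ} (hm : 1 ≤ m) : log 3 ≤ log (3 * m) := by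
  have : (1 : ℝ) ≤ m := by exact_mod_cast hm
  exact log_le_log three_pos (by linarith)

theorem log_add_ceil_log_le {m k : ℕ} (hm : 1 ≤ m) (hk : 3 ≤ k) :
    log (m + ⌈log k⌉₊ : ℕ) ≤ (1 + 1 / log (log 3)) * (log (3 * m) * log (log k)) := by
  have hlog3 := one_lt_log_three
  have hloglog3 : 0 < log (log 3) := log_pos hlog3
  have hm1 : (1 : ℝ) ≤ m := by exact_mod_cast hm
  have hlogk : log 3 ≤ log k := log_le_log three_pos (by exact_mod_cast hk)
  have hlogm : 1 ≤ log (3 * m) := hlog3.le.trans (log_three_le_log_three_mul hm)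
  have hY : ((m + ⌈log k⌉₊ : ℕ) : ℝ) ≤ 3 * m * log k := by
    have := Nat.ceil_lt_add_one (by linarith : 0 ≤ log k)
    rw [Nat.cast_add]
    nlinarith
  have hratio : 1 ≤ 1 / log (log 3) * log (log k) := by
    rw [one_div_mul_eq_div, one_le_div hloglog3]
    exact log_le_log (by linarith) hlogk
  have hloglogk : 0 ≤ log (log k) := log_nonneg (by linarith)
  calc log (m + ⌈log k⌉₊ : ℕ) ≤ log (3 * m * log k) :=
        log_le_log (by exact_mod_cast Nat.add_pos_left hm _) hY
    _ = log (3 * m) + log (log k) := log_mul (by positivity) (by linarith)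
    _ ≤ log (3 * m) * (1 / log (log 3) * log (log k)) + log (3 * m) * log (log k) := by
        gcongr
        · exact le_mul_of_one_le_right (by linarith) hratio
        · exact le_mul_of_one_le_left hloglogk hlogm
    _ = _ := by ring

theorem exists_truncatedSingularSeries_le : ∃ K : ℝ, 0 < K ∧
    ∀ m k : ℕ, 1 ≤ m → 3 ≤ k → ∀ h : Fin m → ℤ, truncatedSingularSeries k h ≤
      (K * log (3 * m)) ^ m * log (log k) ^ (m - 1) *
        exp (largePrimeExcess (m + ⌈log k⌉₊) k h) := by
  set K := 3 * exp 4 * (1 + 1 / log (log 3)) with hK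
  have hK1 : 1 ≤ K := by
    have := one_div_pos.mpr (log_pos one_lt_log_three)
    nlinarith [add_one_le_exp (4 : ℝ)]
  refine ⟨K, by linarith, fun m k hm hk h => ?_⟩
  set Y := m + ⌈log k⌉₊
  set a := log (3 * m)
  set b := log (log k)
  have hlogk : 1 < log k := one_lt_log_three.trans_le (log_le_log three_pos (by exact_mod_cast hk))
  have ha : 1 ≤ a := one_lt_log_three.le.trans (log_three_le_log_three_mul hm)
  have hb : 0 < b := log_pos hlogk
  have hY : 2 ≤ Y := Nat.add_le_add hm (Nat.one_le_ceil_iff.mpr (by linarith))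
  have hprod : ∏ p ∈ Y.primesLE, (1 - 1 / (p : ℝ))⁻¹ ≤ K * a * b :=
    calc _ ≤ 3 * exp 4 * log Y := prod_primesLE_inv_one_sub_one_div_le hY
      _ ≤ 3 * exp 4 * ((1 + 1 / log (log 3)) * (a * b)) := by
          gcongr
          exact log_add_ceil_log_le hm hk
      _ = K * a * b := by rw [hK]; ring
  have hprod_nonneg : 0 ≤ ∏ p ∈ Y.primesLE, (1 - 1 / (p : ℝ))⁻¹ :=
    Finset.prod_nonneg fun p hp => zero_le_one.trans
      (one_le_inv_one_sub_one_div (by exact_mod_cast Nat.one_lt_of_mem_primesLE hp))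
  calc truncatedSingularSeries k h
      ≤ (∏ p ∈ Y.primesLE, (1 - 1 / (p : ℝ))⁻¹) ^ (m - 1) * exp (largePrimeExcess Y k h) :=
        truncatedSingularSeries_le hm Y k h
    _ ≤ (K * a * b) ^ (m - 1) * exp (largePrimeExcess Y k h) := by gcongr
    _ = (K * a) ^ (m - 1) * b ^ (m - 1) * exp (largePrimeExcess Y k h) := by rw [mul_pow]
    _ ≤ (K * a) ^ m * b ^ (m - 1) * exp (largePrimeExcess Y k h) := by
        gcongr
        · nlinarith
        · exact Nat.sub_le m 1

-- Since `log (3 * m) ≥ log 3 > 1`, a power of `log (3 * m)` absorbs any absolute constant.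
theorem exists_mul_lt_largePrimeExcess (D : ℝ) : ∃ c : ℝ, 0 < c ∧
    ∀ m k : ℕ, 1 ≤ m → 3 ≤ k → ∀ h : Fin m → ℤ,
      log (3 * m) ^ (c * m) * log (log k) ^ (m - 1) < truncatedSingularSeries k h →
        D * m < largePrimeExcess (m + ⌈log k⌉₊) k h := by
  obtain ⟨K, hK, hseries⟩ := exists_truncatedSingularSeries_le
  obtain ⟨n, hn⟩ := pow_unbounded_of_one_lt (K * exp D) one_lt_log_three
  refine ⟨n + 1, by positivity, fun m k hm hk h hlarge => ?_⟩
  set a := log (3 * m)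
  have ha : log 3 ≤ a := log_three_le_log_three_mul hm
  have ha0 : 0 < a := by linarith [one_lt_log_three]
  have hloglogk : 0 < log (log k) := log_pos
    (one_lt_log_three.trans_le (log_le_log three_pos (by exact_mod_cast hk)))
  have hconst : (K * a) ^ m * exp (D * m) ≤ a ^ ((n + 1 : ℝ) * m) := by
    rw [rpow_mul_natCast ha0.le, mul_comm D, exp_nat_mul, ← mul_pow, rpow_add_one ha0.ne',
      rpow_natCast]
    refine pow_le_pow_left₀ (by positivity) ?_ m
    calc K * a * exp D = K * exp D * a := by ring
      _ ≤ log 3 ^ n * a := by gcongr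
      _ ≤ a ^ n * a := by
          have := one_lt_log_three
          gcongr
  have hlt : (K * a) ^ m * log (log k) ^ (m - 1) * exp (D * m) <
      (K * a) ^ m * log (log k) ^ (m - 1) * exp (largePrimeExcess (m + ⌈log k⌉₊) k h) :=
    calc _ = (K * a) ^ m * exp (D * m) * log (log k) ^ (m - 1) := by ring
      _ ≤ a ^ ((n + 1 : ℝ) * m) * log (log k) ^ (m - 1) := by gcongr
      _ < truncatedSingularSeries k h := hlarge
      _ ≤ _ := hseries m k hm hk h
  exact exp_lt_exp.mp (lt_of_mul_lt_mul_left hlt (by positivity))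

end SingularSeries

section LargeDeviations

open Real

theorem sum_Ioc_one_div_sub_one_sq_le {Y : ℕ} (hY : 0 < Y) (k : ℕ) :
    ∑ j ∈ Finset.Ioc Y k, 1 / ((j : ℝ) - 1) ^ 2 ≤ 2 / (Y : ℝ) := by
  have hsum := sum_Ioo_inv_sq_le (α := ℝ) (Y - 1) k
  rw [Nat.cast_pred hY, sub_add_cancel] at hsum
  refine le_trans (le_of_eq ?_) hsum
  refine Finset.sum_nbij' (· - 1) (· + 1) ?_ ?_ ?_ ?_ fun j hj => ?_
  any_goals intro j hj; simp only [Finset.mem_Ioc, Finset.mem_Ioo] at *; lia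
  rw [Nat.cast_pred (hY.trans (Finset.mem_Ioc.mp hj).1), one_div]

theorem sum_primesLE_one_div_sub_one_sq_le {Y : ℕ} (hY : 0 < Y) (k : ℕ) :
    ∑ p ∈ k.primesLE with Y < p, 1 / ((p : ℝ) - 1) ^ 2 ≤ 2 / (Y : ℝ) := by
  refine le_trans (Finset.sum_le_sum_of_subset_of_nonneg (fun p hp => ?_) fun _ _ _ => by
    positivity) (sum_Ioc_one_div_sub_one_sq_le hY k)
  obtain ⟨hpk, hYp⟩ := Finset.mem_filter.mp hp
  exact Finset.mem_Ioc.mpr ⟨hYp, Nat.le_of_mem_primesLE hpk⟩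

theorem two_mul_sq_mul_sum_div_sub_one_le {m Y : ℕ} (hY : 0 < Y) (hmY : m ≤ Y) {L : ℝ}
    (hL : 0 ≤ L) (k : ℕ) :
    2 * m ^ 2 * ∑ p ∈ k.primesLE, (if Y < p then L / ((p : ℝ) - 1) else 0) / (p - 1) ≤
      4 * m * L := by
  have hsum : ∑ p ∈ k.primesLE, (if Y < p then L / ((p : ℝ) - 1) else 0) / (p - 1) =
      L * ∑ p ∈ k.primesLE with Y < p, 1 / ((p : ℝ) - 1) ^ 2 := by
    rw [Finset.sum_filter, Finset.mul_sum]
    refine Finset.sum_congr rfl fun p _ => ?_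
    split_ifs
    · rw [div_div, mul_one_div, sq]
    · rw [zero_div, mul_zero]
  have hmY1 : (m : ℝ) / Y ≤ 1 :=
    (div_le_one (by exact_mod_cast hY)).mpr (by exact_mod_cast hmY)
  calc _ = 2 * m ^ 2 * (L * ∑ p ∈ k.primesLE with Y < p, 1 / ((p : ℝ) - 1) ^ 2) := by rw [hsum]
    _ ≤ 2 * m ^ 2 * (L * (2 / Y)) := by
        gcongr
        exact sum_primesLE_one_div_sub_one_sq_le hY k
    _ = 4 * m * L * (m / Y) := by ring
    _ ≤ 4 * m * L := mul_le_of_le_one_right (by positivity) hmY1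

theorem sum_exp_mul_largePrimeExcess_le {a b : ℤ} (hab : a ≤ b) {m Y : ℕ} (hY : 0 < Y)
    (hmY : m ≤ Y) {L : ℝ} (hL : 0 ≤ L) (hLY : L ≤ Y) (k : ℕ) :
    ∑ h ∈ Fintype.piFinset (fun _ : Fin m => coprimeIoc a b (primorial k)),
        exp (L * largePrimeExcess Y k h) ≤
      (((b - a : ℝ) / primorial k + 1) * (primorial k).totient) ^ m * exp (4 * m * L) := by
  let u (p : ℕ) : ℝ := if Y < p then L / (p - 1) else 0
  have hu : ∀ p, 0 ≤ u p ∧ u p ≤ 1 := fun p => by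
    dsimp only [u]
    split_ifs with hp
    · have hYp : (Y : ℝ) ≤ p - 1 := le_sub_iff_add_le.mpr (by exact_mod_cast hp)
      have hp0 : (0 : ℝ) < p - 1 := hYp.trans_lt' (by exact_mod_cast hY)
      exact ⟨by positivity, (div_le_one hp0).mpr (hLY.trans hYp)⟩
    · simp
  have hexcess : ∀ h : Fin m → ℤ,
      L * largePrimeExcess Y k h = ∑ p ∈ k.primesLE, (m - residCount p h) * u p := fun h => by
    rw [largePrimeExcess, Finset.mul_sum, Finset.sum_filter]
    refine Finset.sum_congr rfl fun p _ => ?_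
    dsimp only [u]
    split_ifs <;> ring
  have : (0 : ℝ) ≤ b - a := sub_nonneg.mpr (by exact_mod_cast hab)
  simp only [hexcess]
  refine (sum_exp_sum_mul_sub_residCount_le hab (fun _ => Nat.prime_of_mem_primesLE)
    (fun p _ => (hu p).1) (fun p _ => (hu p).2) m).trans ?_
  rw [← primorial_eq_prod_primesLE]
  gcongr _ * exp ?_
  exact two_mul_sq_mul_sum_div_sub_one_le hY hmY hL k

theorem card_filter_lt_le_exp_mul_sum_exp {α : Type*} (s : Finset α) (f : α → ℝ) {L : ℝ}
    (hL : 0 ≤ L) (T : ℝ) :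
    ({x ∈ s | T < f x}.card : ℝ) ≤ exp (-(L * T)) * ∑ x ∈ s, exp (L * f x) :=
  calc ({x ∈ s | T < f x}.card : ℝ) = ∑ x ∈ s with T < f x, 1 := by simp
    _ ≤ ∑ x ∈ s with T < f x, exp (-(L * T)) * exp (L * f x) := by
        refine Finset.sum_le_sum fun x hx => ?_
        rw [← exp_add]
        exact one_le_exp (by nlinarith [(Finset.mem_filter.mp hx).2])
    _ ≤ ∑ x ∈ s, exp (-(L * T)) * exp (L * f x) :=
        Finset.sum_le_sum_of_subset_of_nonneg (Finset.filter_subset _ _)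
          fun _ _ _ => by positivity
    _ = _ := (Finset.mul_sum _ _ _).symm

theorem add_one_pow_le_two_mul_sub_one_pow {m : ℕ} {q : ℝ} (hq : 4 * m ≤ q) :
    (q + 1) ^ m ≤ 2 * (q - 1) ^ m := by
  have hq0 : 0 < q + 1 := by linarith [m.cast_nonneg (α := ℝ)]
  have hbernoulli : 1 / 2 ≤ (1 + -(2 / (q + 1))) ^ m :=
    calc (1 / 2 : ℝ) ≤ 1 + m * -(2 / (q + 1)) := by
          have : m * (2 / (q + 1)) ≤ 1 / 2 := by
            rw [mul_div_assoc', div_le_iff₀ hq0]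
            linarith
          linarith
      _ ≤ _ := one_add_mul_le_pow (by
          have : 2 / (q + 1) ≤ 2 := div_le_self two_pos.le (by
            linarith [m.cast_nonneg (α := ℝ)])
          linarith) m
  calc (q + 1) ^ m = 2 * ((q + 1) ^ m * (1 / 2)) := by ring
    _ ≤ 2 * ((q + 1) ^ m * (1 + -(2 / (q + 1))) ^ m) := by gcongr
    _ = 2 * (q - 1) ^ m := by
        rw [← mul_pow]
        congr 2
        field_simp
        ring

theorem mul_totient_pow_le_two_mul_card_coprimeIoc_pow {a b : ℤ} {m P : ℕ} (hP : 0 < P)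
    (hm : 0 < m) (hab : 4 * m * (P : ℤ) ≤ b - a) :
    (((b - a : ℝ) / P + 1) * P.totient) ^ m ≤ 2 * ((coprimeIoc a b P).card : ℝ) ^ m := by
  have hm1 : (1 : ℝ) ≤ m := by exact_mod_cast hm
  have hle : a ≤ b := sub_nonneg.mp ((by positivity : (0 : ℤ) ≤ 4 * m * P).trans hab)
  have hq : 4 * m ≤ (b - a : ℝ) / P := by
    rw [le_div_iff₀ (by exact_mod_cast hP)]
    exact_mod_cast hab
  calc (((b - a : ℝ) / P + 1) * P.totient) ^ m
      ≤ 2 * ((b - a : ℝ) / P - 1) ^ m * P.totient ^ m := by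
        rw [mul_pow]
        gcongr
        exact add_one_pow_le_two_mul_sub_one_pow hq
    _ = 2 * (P.totient * ((b - a : ℝ) / P - 1)) ^ m := by
        rw [mul_pow (P.totient : ℝ)]
        ring
    _ ≤ 2 * ((coprimeIoc a b P).card : ℝ) ^ m := by
        gcongr
        · exact mul_nonneg (Nat.cast_nonneg _) (by linarith)
        · exact totient_mul_le_card_coprimeIoc hle hP

theorem card_filter_lt_largePrimeExcess_le {a b : ℤ} {m k : ℕ} (hm : 1 ≤ m) (hk : 2 ≤ k)
    (hab : 4 * m * (primorial k : ℤ) ≤ b - a) (A : ℕ) :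
    ({h ∈ Fintype.piFinset (fun _ : Fin m => coprimeIoc a b (primorial k)) |
        (A + 5) * m < largePrimeExcess (m + ⌈log k⌉₊) k h}.card : ℝ) ≤
      ((coprimeIoc a b (primorial k)).card : ℝ) ^ m / k ^ (A * m) := by
  have hk2 : (2 : ℝ) ≤ k := by exact_mod_cast hk
  have hk0 : (0 : ℝ) < k := by linarith
  have hle : a ≤ b := sub_nonneg.mp ((by positivity : (0 : ℤ) ≤ 4 * m * primorial k).trans hab)
  have hlog : 0 ≤ log k := log_natCast_nonneg k
  have hlogY : log k ≤ (m + ⌈log k⌉₊ : ℕ) :=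
    (Nat.le_ceil _).trans (by exact_mod_cast Nat.le_add_left _ _)
  have hsaving : exp (-(log k * ((A + 5) * m))) * exp (4 * m * log k) =
      1 / (k ^ m * k ^ (A * m)) := by
    rw [← exp_add, ← pow_add, one_div, ← exp_log (pow_pos hk0 _), ← exp_neg, log_pow]
    push_cast
    ring_nf
  have htwo : 2 / (k : ℝ) ^ m ≤ 1 :=
    (div_le_one (by positivity)).mpr (hk2.trans (le_self_pow₀ (by linarith) (by lia)))
  calc _ ≤ exp (-(log k * ((A + 5) * m))) *
        ((((b - a : ℝ) / primorial k + 1) * (primorial k).totient) ^ m *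
          exp (4 * m * log k)) :=
        (card_filter_lt_le_exp_mul_sum_exp _ _ hlog _).trans (by
          gcongr
          exact sum_exp_mul_largePrimeExcess_le hle (by lia) (by lia) hlog hlogY k)
    _ ≤ exp (-(log k * ((A + 5) * m))) *
        (2 * ((coprimeIoc a b (primorial k)).card : ℝ) ^ m * exp (4 * m * log k)) := by
        gcongr
        exact mul_totient_pow_le_two_mul_card_coprimeIoc_pow (primorial_pos k) hm hab
    _ = 2 / k ^ m * (((coprimeIoc a b (primorial k)).card : ℝ) ^ m / k ^ (A * m)) := by
        rw [mul_comm, mul_assoc, mul_comm (exp _), hsaving]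
        field_simp
    _ ≤ _ := mul_le_of_le_one_left (by positivity) htwo

end LargeDeviations

theorem sixteen_mul_mul_choose_le_pow {m k : ℕ} (hm : 1 ≤ m) (hmk : m ≤ k) (hk : 3 ≤ k) :
    16 * m * (k - 1).choose (m - 1) ≤ k ^ (4 * m) :=
  calc 16 * m * (k - 1).choose (m - 1) ≤ 3 ^ 3 * k * (k - 1) ^ (m - 1) := by
        gcongr
        · norm_num
        · exact Nat.choose_le_pow _ _
    _ ≤ k ^ 3 * k * k ^ (m - 1) := by
        gcongr
        exact Nat.sub_le k 1
    _ = k ^ (m + 3) := by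
        rw [← pow_succ, ← pow_add]
        congr 1
        lia
    _ ≤ k ^ (4 * m) := Nat.pow_le_pow_right (by lia) (by lia)

theorem stmt_15_general (A : ℕ) : ∃ c : ℝ, 0 < c ∧ ∀ m k : ℕ, 1 ≤ m → 3 ≤ k →
    ∃ x₀ : ℝ, ∀ x : ℝ, x₀ ≤ x →
      (Nat.card {h : Fin m → ℤ // (∀ i, h i ∈ Nset k x) ∧
          (Real.log (3 * m)) ^ (c * m) * (Real.log (Real.log k)) ^ (m - 1) <
            truncatedSingularSeries k h} : ℝ) ≤
        (Nat.card (Nset k x) : ℝ) ^ m / k ^ (A * m) := by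
  obtain ⟨c, hc, hexcess⟩ := exists_mul_lt_largePrimeExcess (A + 5)
  refine ⟨c, hc, fun m k hm hk => ⟨4 * m * primorial k, fun x hx => ?_⟩⟩
  have hlength : 4 * m * (primorial k : ℤ) ≤ ⌊x⌋ - ⌊-x⌋ := by
    have hpos : 1 ≤ 4 * m * primorial k := by
      have := primorial_pos k
      exact Nat.succ_le_of_lt (by positivity)
    have hx1 : 1 ≤ x := hx.trans' (by exact_mod_cast hpos)
    have : (4 * m * primorial k : ℝ) ≤ ⌊x⌋ - ⌊-x⌋ := by
      linarith [Int.lt_floor_add_one x, Int.floor_le (-x)]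
    exact_mod_cast this
  set N := coprimeIoc ⌊-x⌋ ⌊x⌋ (primorial k)
  have hN : Nat.card (Nset k x) = N.card := by
    rw [← coe_coprimeIoc_floor, Nat.card_eq_card_toFinset, Finset.toFinset_coe]
  have hsub : {h : Fin m → ℤ | (∀ i, h i ∈ Nset k x) ∧
      (Real.log (3 * m)) ^ (c * m) * (Real.log (Real.log k)) ^ (m - 1) <
        truncatedSingularSeries k h} ⊆
      ({h ∈ Fintype.piFinset fun _ : Fin m => N |
        (A + 5) * m < largePrimeExcess (m + ⌈Real.log k⌉₊) k h} : Finset (Fin m → ℤ)) := by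
    rintro h ⟨hmem, hlarge⟩
    simp only [← coe_coprimeIoc_floor, Finset.mem_coe] at hmem
    exact Finset.mem_coe.mpr (Finset.mem_filter.mpr
      ⟨Fintype.mem_piFinset.mpr hmem, hexcess m k hm hk h hlarge⟩)
  have hcard := Set.ncard_le_ncard hsub
  rw [Set.ncard_coe_finset] at hcard
  rw [hN]
  exact (Nat.cast_le.mpr hcard).trans
    (card_filter_lt_largePrimeExcess_le hm (by lia) hlength A)

theorem stmt_15 : ∃ c : ℝ, 0 < c ∧ ∀ m k : ℕ, 1 ≤ m → m ≤ k → 3 ≤ k →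
    ∃ x₀ : ℝ, ∀ x : ℝ, x₀ ≤ x →
      (Nat.card {h : Fin m → ℤ // (∀ i, h i ∈ Nset k x) ∧
          (Real.log (3 * m)) ^ (c * m) * (Real.log (Real.log k)) ^ (m - 1) <
            ∏ p ∈ Finset.filter Nat.Prime (Finset.range (k + 1)),
              (1 - (residCount p h : ℝ) / p) / (1 - 1 / (p : ℝ)) ^ m} : ℝ) ≤
        (Nat.card (Nset k x) : ℝ) ^ m / (16 * m * Nat.choose (k - 1) (m - 1)) := by
  obtain ⟨c, hc, hbound⟩ := stmt_15_general 4
  refine ⟨c, hc, fun m k hm hmk hk => (hbound m k hm hk).imp fun x₀ hx₀ x hx =>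
    (hx₀ x hx).trans ?_⟩
  have hchoose : 0 < (k - 1).choose (m - 1) := Nat.choose_pos (by lia)
  gcongr
  exact_mod_cast sixteen_mul_mul_choose_le_pow hm hmk hk
end

section
/- For every integer m ≥ 1, the limit ρ_ad(m) = lim_{N→∞} #{(h_1,…,h_m) ∈ {1,…,N}^m : (h_1,…,h_m) is admissible} / N^m exists, and there is an absolute constant C > 0 such that for all m ≥ 3: e^{−C m log log m / log m} ≤ ρ_ad(m) · (e^γ log m)^m ≤ e^{C m log log m / log m}, where γ is the Euler–Mascheroni constant. -/
open Filter

/-- A `k`-tuple of integers is admissible if for every prime `p` its entries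
do not cover all residue classes mod `p`. -/
def AdmissibleTuple {k : ℕ} (x : Fin k → ℤ) : Prop :=
  ∀ p : ℕ, p.Prime → ∃ r : ZMod p, ∀ i, (x i : ZMod p) ≠ r

/-- The number of admissible `m`-tuples with entries in `{1, …, N}`. -/
noncomputable def admCount (m N : ℕ) : ℕ :=
  Nat.card {h : Fin m → ℤ // (∀ i, 1 ≤ h i ∧ h i ≤ (N : ℤ)) ∧ AdmissibleTuple h}

/-!
By the Chinese remainder theorem the limit is `∏_{p ≤ m} δ_p`, where `δ_p` is the proportion of
non-surjective maps from an `m`-element set to `ZMod p`. Fixing one missed residue class, or taking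
a union bound over all of them, gives `(1 - 1/p)^m ≤ δ_p ≤ p (1 - 1/p)^m`.

The lower bound multiplies the left inequality over all `p ≤ m`. For the upper bound the loss
`∏ p` would be too large over all `p ≤ m`, so the right inequality is used only for
`p ≤ n = ⌈m / log m⌉`, and `δ_p ≤ 1` otherwise: then `∏_{p ≤ n} p ≤ 4^n` costs `O(m / log m)` in
the exponent, and `log n` in place of `log m` costs `O(m log log m / log m)`.

Both bounds then follow from Mertens' third theorem with error `O(1 / log n)`. Its constant `e^γ`
is identified by an Abelian argument: as `d → 0⁺`, the series `∑_p log (1 - 1/p) p^{-d}` behaves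
like `-log ζ(1 + d)`, hence like `log (1 - e^{-d}) = -∑_n e^{-nd} / n`, whose partial sums are
harmonic numbers.
-/

section MertensFirst

open Real

theorem log_factorial_eq_sum_primesLE (n : ℕ) :
    log n.factorial = ∑ p ∈ n.primesLE, n.factorial.factorization p * log p := by
  rw [log_nat_eq_sum_factorization]
  refine Finsupp.sum_of_support_subset _ (fun p hp => ?_) _ (by simp)
  rw [Nat.support_factorization, Nat.mem_primeFactors] at hp
  exact Nat.mem_primesLE.2 ⟨hp.1.dvd_factorial.1 hp.2.1, hp.1⟩

theorem div_sub_one_le_factorization_factorial {p : ℕ} (hp : p.Prime) (n : ℕ) :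
    (n / p - 1 : ℝ) ≤ n.factorial.factorization p := by
  have hdiv : n / p ≤ n.factorial.factorization p := by
    rw [Nat.factorization_factorial hp (lt_add_of_pos_right (Nat.log p n) two_pos)]
    simpa using Finset.single_le_sum (f := fun i => n / p ^ i) (fun _ _ => Nat.zero_le _)
      (Finset.mem_Ico.2 ⟨le_rfl, by lia⟩ : 1 ∈ Finset.Ico 1 (Nat.log p n + 2))
  calc (n / p - 1 : ℝ) ≤ (n / p : ℕ) := by
        rw [← Nat.floor_div_eq_div (K := ℝ)]; exact (Nat.sub_one_lt_floor _).le
    _ ≤ n.factorial.factorization p := by exact_mod_cast hdiv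

theorem factorization_factorial_le_div_sub_one {p : ℕ} (hp : p.Prime) (n : ℕ) :
    (n.factorial.factorization p : ℝ) ≤ n / (p - 1) :=
  calc (n.factorial.factorization p : ℝ) ≤ (n / (p - 1) : ℕ) := by
        exact_mod_cast Nat.factorization_factorial_le_div_pred hp n
    _ ≤ n / (p - 1 : ℕ) := Nat.cast_div_le
    _ = n / (p - 1) := by rw [Nat.cast_pred hp.pos]

theorem log_div_mul_sub_one_nonneg (k : ℕ) : 0 ≤ log k / (k * (k - 1)) := by
  rcases k.eq_zero_or_pos with rfl | hk
  · simp
  · have : (0 : ℝ) ≤ k - 1 := sub_nonneg.2 (by exact_mod_cast hk)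
    have := log_natCast_nonneg k
    positivity

theorem summable_log_div_mul_sub_one : Summable fun k : ℕ => log k / (k * (k - 1)) := by
  refine Summable.of_nonneg_of_le log_div_mul_sub_one_nonneg (fun k => ?_)
    ((summable_nat_rpow_inv.2 (by norm_num : (1 : ℝ) < 3 / 2)).mul_left 4)
  rcases Nat.lt_or_ge k 2 with hk | hk
  · interval_cases k <;> simp
  have hk2 : (2 : ℝ) ≤ k := by exact_mod_cast hk
  have hlog : log k ≤ 2 * (k : ℝ) ^ (1 / 2 : ℝ) := by
    linarith [log_natCast_le_rpow_div k (by norm_num : (0 : ℝ) < 1 / 2)]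
  have hpow : (k : ℝ) ^ (1 / 2 : ℝ) * (k : ℝ) ^ (3 / 2 : ℝ) = k * k := by
    rw [← rpow_add (by linarith)]; norm_num; ring
  rw [← div_eq_mul_inv, div_le_div_iff₀ (by nlinarith) (by positivity)]
  calc log k * (k : ℝ) ^ (3 / 2 : ℝ) ≤ 2 * (k : ℝ) ^ (1 / 2 : ℝ) * (k : ℝ) ^ (3 / 2 : ℝ) := by
        gcongr
    _ = 2 * (k * k) := by rw [mul_assoc, hpow]
    _ ≤ 4 * (k * (k - 1)) := by nlinarith

theorem sum_primesLE_log_div_le {n : ℕ} (hn : n ≠ 0) :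
    ∑ p ∈ n.primesLE, log p / p ≤ log n + log 4 := by
  have hn0 : (0 : ℝ) < n := by exact_mod_cast hn.bot_lt
  refine le_of_mul_le_mul_left ?_ hn0
  calc n * ∑ p ∈ n.primesLE, log p / p
      = ∑ p ∈ n.primesLE, (n / p - 1) * log p + Chebyshev.theta n := by
        rw [Chebyshev.theta_eq_sum_primesLE_log, ← Finset.sum_add_distrib, Finset.mul_sum]
        exact Finset.sum_congr rfl fun p _ => by ring
    _ ≤ log n.factorial + log 4 * n := by
        rw [log_factorial_eq_sum_primesLE]
        gcongr with p hp
        · exact div_sub_one_le_factorization_factorial (Nat.prime_of_mem_primesLE hp) n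
        · exact Chebyshev.theta_le_log4_mul_x hn0.le
    _ ≤ log (n ^ n : ℕ) + log 4 * n := by gcongr; exact n.factorial_le_pow
    _ = n * (log n + log 4) := by push_cast; rw [log_pow]; ring

theorem log_le_sum_primesLE_log_div_add {n : ℕ} (hn : n ≠ 0) :
    log n ≤ ∑ p ∈ n.primesLE, log p / p + (∑' k : ℕ, log k / (k * (k - 1)) + 1) := by
  have hn0 : (0 : ℝ) < n := by exact_mod_cast hn.bot_lt
  have hstirling : n * log n - n ≤ log n.factorial := by
    have h := log_le_log (by positivity) (pow_div_factorial_le_exp (n : ℝ) hn0.le n)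
    rw [log_exp, log_div (by positivity) (by positivity), log_pow] at h
    linarith
  refine le_of_mul_le_mul_left ?_ hn0
  calc n * log n ≤ log n.factorial + n := by linarith
    _ ≤ ∑ p ∈ n.primesLE, n / (p - 1) * log p + n := by
        rw [log_factorial_eq_sum_primesLE]
        gcongr with p hp
        exact factorization_factorial_le_div_sub_one (Nat.prime_of_mem_primesLE hp) n
    _ = n * (∑ p ∈ n.primesLE, log p / p + (∑ p ∈ n.primesLE, log p / (p * (p - 1)) + 1)) := by
        rw [← add_assoc, ← Finset.sum_add_distrib, mul_add, mul_one, Finset.mul_sum]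
        congr 1
        refine Finset.sum_congr rfl fun p hp => ?_
        have hp1 : (1 : ℝ) < p := by exact_mod_cast (Nat.prime_of_mem_primesLE hp).one_lt
        have : (p : ℝ) - 1 ≠ 0 := by linarith
        field_simp
        ring
    _ ≤ _ := by
        gcongr
        exact summable_log_div_mul_sub_one.sum_le_tsum _ fun k _ => log_div_mul_sub_one_nonneg k

theorem mertens_first :
    ∃ K : ℝ, ∀ n : ℕ, n ≠ 0 → |∑ p ∈ n.primesLE, log p / p - log n| ≤ K := by
  refine ⟨log 4 + (∑' k : ℕ, log k / (k * (k - 1)) + 1), fun n hn => ?_⟩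
  have htsum : 0 ≤ ∑' k : ℕ, log k / (k * (k - 1)) := tsum_nonneg log_div_mul_sub_one_nonneg
  have hlog4 : 0 ≤ log 4 := log_nonneg (by norm_num)
  have hupper := sum_primesLE_log_div_le hn
  have hlower := log_le_sum_primesLE_log_div_add hn
  rw [abs_le]
  constructor <;> linarith

end MertensFirst

section PartialSummation

open Real

theorem abs_sub_le_sub_of_abs_succ_sub_le {u v : ℕ → ℝ} {n₀ : ℕ}
    (h : ∀ n, n₀ ≤ n → |u (n + 1) - u n| ≤ v n - v (n + 1)) {m n : ℕ} (hm : n₀ ≤ m)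
    (hmn : m ≤ n) : |u n - u m| ≤ v m - v n := by
  induction n, hmn using Nat.le_induction with
  | base => simp
  | succ k hk ih => linarith [h k (hm.trans hk), abs_sub_le (u (k + 1)) (u k) (u m)]

theorem exists_forall_abs_sub_le_of_abs_succ_sub_le {u v : ℕ → ℝ} {n₀ : ℕ}
    (hv : Tendsto v atTop (nhds 0)) (h : ∀ n, n₀ ≤ n → |u (n + 1) - u n| ≤ v n - v (n + 1)) :
    ∃ M, ∀ n, n₀ ≤ n → |u n - M| ≤ v n := by
  have hsub : ∀ {m n}, n₀ ≤ m → m ≤ n → |u n - u m| ≤ v m - v n :=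
    abs_sub_le_sub_of_abs_succ_sub_le h
  have hv_sub (m : ℕ) : Tendsto (fun n => v m - v n) atTop (nhds (v m)) := by
    simpa using hv.const_sub (v m)
  have hv0 : ∀ m, n₀ ≤ m → 0 ≤ v m := fun m hm =>
    ge_of_tendsto (hv_sub m) <| (eventually_ge_atTop m).mono fun n hn =>
      (abs_nonneg _).trans (hsub hm hn)
  have hcauchy : CauchySeq fun k => u (k + n₀) := by
    refine cauchySeq_of_le_tendsto_0' (fun k => v (k + n₀)) (fun k j hkj => ?_)
      (hv.comp (tendsto_add_atTop_nat n₀))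
    rw [dist_comm, Real.dist_eq]
    linarith [hsub (show n₀ ≤ k + n₀ by lia) (show k + n₀ ≤ j + n₀ by lia),
      hv0 (j + n₀) (by lia)]
  obtain ⟨M, hM⟩ := cauchySeq_tendsto_of_complete hcauchy
  have hM' : Tendsto u atTop (nhds M) := (tendsto_add_atTop_iff_nat n₀).1 hM
  refine ⟨M, fun n hn => ?_⟩
  rw [abs_sub_comm]
  exact le_of_tendsto_of_tendsto (hM'.sub_const (u n)).abs (hv_sub n)
    (eventually_atTop.2 ⟨n, fun k => hsub hn⟩)

theorem exists_abs_sum_range_sub_le_div {f : ℕ → ℝ} {c : ℝ}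
    (hf : ∀ k, k ≠ 0 → |f k| ≤ c / k ^ 2) :
    ∃ M, ∀ n, 1 ≤ n → |∑ k ∈ Finset.range (n + 1), f k - M| ≤ c / n := by
  have hc : 0 ≤ c := by simpa using (abs_nonneg _).trans (hf 1 one_ne_zero)
  refine exists_forall_abs_sub_le_of_abs_succ_sub_le (tendsto_const_div_atTop_nhds_zero_nat c)
    fun n hn => ?_
  have hn0 : (0 : ℝ) < n := by exact_mod_cast hn
  rw [Finset.sum_range_succ _ (n + 1), add_sub_cancel_left]
  calc |f (n + 1)| ≤ c / ((n + 1 : ℕ) : ℝ) ^ 2 := hf _ n.succ_ne_zero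
    _ ≤ c / (n * (n + 1 : ℕ)) := by gcongr; push_cast; nlinarith
    _ = c / n - c / (n + 1 : ℕ) := by push_cast; field_simp; ring

theorem abs_sub_div_sub_log_sub_log_le {a b : ℝ} (ha : 0 < a) (hab : a ≤ b) (hb : b ≤ a + 1) :
    |(b - a) / b - (log b - log a)| ≤ a⁻¹ - b⁻¹ := by
  have hb0 : 0 < b := ha.trans_le hab
  have hupper : log b - log a ≤ (b - a) / a := by
    rw [← log_div hb0.ne' ha.ne', sub_div, div_self ha.ne']
    exact log_le_sub_one_of_pos (by positivity)
  have hlower : (b - a) / b ≤ log b - log a := by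
    rw [← log_div hb0.ne' ha.ne', sub_div, div_self hb0.ne', ← inv_div]
    exact one_sub_inv_le_log_of_pos (by positivity)
  have hgap : (b - a) / a - (b - a) / b ≤ a⁻¹ - b⁻¹ := by
    rw [div_eq_mul_inv, div_eq_mul_inv, ← mul_sub]
    exact mul_le_of_le_one_left (sub_nonneg.2 (inv_anti₀ ha hab)) (by linarith)
  rw [abs_le]
  constructor <;> linarith

theorem log_succ_le_log_add_one {n : ℕ} (hn : n ≠ 0) : log (n + 1 : ℕ) ≤ log n + 1 := by
  have hn1 : (1 : ℝ) ≤ n := by exact_mod_cast Nat.one_le_iff_ne_zero.2 hn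
  have hlog := log_le_sub_one_of_pos (show (0 : ℝ) < (n + 1 : ℕ) / n by positivity)
  have hratio : ((n + 1 : ℕ) : ℝ) / n ≤ 2 := by
    rw [div_le_iff₀ (by linarith)]; push_cast; linarith
  rw [log_div (by positivity) (by positivity)] at hlog
  linarith

-- One step of Abel summation: `a` and `b` are consecutive logarithms, `c` is the new term and `R`
-- is the error of the partial sum before it.
theorem abs_partial_summation_increment_le {a b c R K : ℝ} (ha : 0 < a) (hab : a ≤ b)
    (hb : b ≤ a + 1) (hR : |R| ≤ K) :
    |c / b - (log b - log a) - ((R + c - (b - a)) / b - R / a)| ≤ (K + 1) / a - (K + 1) / b := by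
  have hb0 : 0 < b := ha.trans_le hab
  have hdiff : 0 ≤ a⁻¹ - b⁻¹ := sub_nonneg.2 (inv_anti₀ ha hab)
  calc _ = |R * (a⁻¹ - b⁻¹) + ((b - a) / b - (log b - log a))| := by
        congr 1; field_simp; ring
    _ ≤ |R| * (a⁻¹ - b⁻¹) + (a⁻¹ - b⁻¹) := by
        refine (abs_add_le _ _).trans ?_
        rw [abs_mul, abs_of_nonneg hdiff]
        gcongr
        exact abs_sub_div_sub_log_sub_log_le ha hab hb
    _ ≤ K * (a⁻¹ - b⁻¹) + (a⁻¹ - b⁻¹) := by gcongr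
    _ = (K + 1) / a - (K + 1) / b := by ring

theorem exists_abs_sum_div_log_sub_log_log_sub_le {c : ℕ → ℝ} {K : ℝ}
    (hK : ∀ n, n ≠ 0 → |∑ k ∈ Finset.range (n + 1), c k - log n| ≤ K) :
    ∃ M, ∀ n, 2 ≤ n →
      |∑ k ∈ Finset.range (n + 1), c k / log k - log (log n) - M| ≤ (2 * K + 1) / log n := by
  set R : ℕ → ℝ := fun n => ∑ k ∈ Finset.range (n + 1), c k - log n with hR
  set Q : ℕ → ℝ := fun n => ∑ k ∈ Finset.range (n + 1), c k / log k - log (log n) with hQ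
  have hlog_pos : ∀ n : ℕ, 2 ≤ n → 0 < log n := fun n hn => log_pos (by exact_mod_cast hn)
  have hv : Tendsto (fun n : ℕ => (K + 1) / log n) atTop (nhds 0) :=
    (tendsto_log_atTop.comp tendsto_natCast_atTop_atTop).const_div_atTop _
  obtain ⟨M, hM⟩ := exists_forall_abs_sub_le_of_abs_succ_sub_le (n₀ := 2)
    (u := fun n => Q n - R n / log n) hv fun n hn => by
      convert abs_partial_summation_increment_le (c := c (n + 1)) (hlog_pos n hn)
        (log_le_log (by positivity) (by simp)) (log_succ_le_log_add_one (by lia))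
        (hK n (by lia)) using 2
      simp only [hQ, hR, Finset.sum_range_succ _ (n + 1)]
      ring
  refine ⟨M, fun n hn => ?_⟩
  calc |Q n - M| = |(Q n - R n / log n - M) + R n / log n| := by ring_nf
    _ ≤ (K + 1) / log n + K / log n := by
        refine (abs_add_le _ _).trans (add_le_add (hM n hn) ?_)
        rw [abs_div, abs_of_pos (hlog_pos n hn)]
        gcongr
        exact hK n (by lia)
    _ = (2 * K + 1) / log n := by ring

end PartialSummation

section MertensProduct

open Real

/-- The Mertens product `∏_{p ≤ n} (1 - 1 / p)` over primes. -/
noncomputable def mertensProduct (n : ℕ) : ℝ := ∏ p ∈ n.primesLE, (1 - (p : ℝ)⁻¹)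

theorem one_sub_inv_prime_pos {p : ℕ} (hp : p.Prime) : 0 < 1 - (p : ℝ)⁻¹ :=
  sub_pos.2 (inv_lt_one_of_one_lt₀ (by exact_mod_cast hp.one_lt))

theorem mertensProduct_pos (n : ℕ) : 0 < mertensProduct n :=
  Finset.prod_pos fun _ hp => one_sub_inv_prime_pos (Nat.prime_of_mem_primesLE hp)

theorem log_mertensProduct (n : ℕ) :
    log (mertensProduct n) = ∑ p ∈ n.primesLE, log (1 - (p : ℝ)⁻¹) :=
  log_prod fun _ hp => (one_sub_inv_prime_pos (Nat.prime_of_mem_primesLE hp)).ne'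

theorem abs_add_log_one_sub_le {x : ℝ} (hx : |x| ≤ 1 / 2) : |x + log (1 - x)| ≤ 2 * x ^ 2 := by
  have h : |x + log (1 - x)| ≤ |x| ^ 2 / (1 - |x|) := by
    simpa using abs_log_sub_add_sum_range_le (hx.trans_lt (by norm_num)) 1
  refine h.trans ?_
  rw [sq_abs, div_le_iff₀ (by linarith)]
  nlinarith [sq_nonneg x]

theorem inv_prime_le_half {p : ℕ} (hp : p.Prime) : (p : ℝ)⁻¹ ≤ 1 / 2 := by
  rw [one_div]
  exact inv_anti₀ two_pos (by exact_mod_cast hp.two_le)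

theorem sum_range_succ_ite_prime (f : ℕ → ℝ) (n : ℕ) :
    ∑ k ∈ Finset.range (n + 1), (if k.Prime then f k else 0) = ∑ p ∈ n.primesLE, f p := by
  rw [Nat.primesLE_eq_filter_range, Finset.sum_filter]

theorem mertens_second :
    ∃ M K : ℝ, ∀ n : ℕ, 2 ≤ n →
      |∑ p ∈ n.primesLE, (p : ℝ)⁻¹ - log (log n) - M| ≤ K / log n := by
  obtain ⟨K, hK⟩ := mertens_first
  obtain ⟨M, hM⟩ := exists_abs_sum_div_log_sub_log_log_sub_le (K := K)
    (c := fun k => if k.Prime then log k / k else 0) fun n hn => by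
      rw [sum_range_succ_ite_prime (fun k => log k / k)]
      exact hK n hn
  refine ⟨M, 2 * K + 1, fun n hn => ?_⟩
  convert hM n hn using 4
  rw [← sum_range_succ_ite_prime]
  refine Finset.sum_congr rfl fun k _ => ?_
  split_ifs with hk
  · have : log k ≠ 0 := (log_pos (by exact_mod_cast hk.one_lt)).ne'
    field_simp
  · rw [zero_div]

theorem exists_abs_sum_inv_add_log_mertensProduct_sub_le :
    ∃ M : ℝ, ∀ n : ℕ, 1 ≤ n →
      |∑ p ∈ n.primesLE, (p : ℝ)⁻¹ + log (mertensProduct n) - M| ≤ 2 / n := by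
  obtain ⟨M, hM⟩ := exists_abs_sum_range_sub_le_div (c := 2)
    (f := fun k => if k.Prime then (k : ℝ)⁻¹ + log (1 - (k : ℝ)⁻¹) else 0) fun k _ => by
      split_ifs with hk
      · have hinv := inv_prime_le_half hk
        refine (abs_add_log_one_sub_le (abs_le.2 ⟨?_, hinv⟩)).trans_eq (by ring)
        linarith [show (0 : ℝ) ≤ (k : ℝ)⁻¹ by positivity]
      · rw [abs_zero]; positivity
  refine ⟨M, fun n hn => ?_⟩
  rw [log_mertensProduct, ← Finset.sum_add_distrib,
    ← sum_range_succ_ite_prime (fun k => (k : ℝ)⁻¹ + log (1 - (k : ℝ)⁻¹))]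
  exact hM n hn

theorem exists_abs_log_mertensProduct_add_log_log_add_le :
    ∃ C K : ℝ, ∀ n : ℕ, 2 ≤ n →
      |log (mertensProduct n) + log (log n) + C| ≤ K / log n := by
  obtain ⟨M₁, K, hM₁⟩ := mertens_second
  obtain ⟨M₂, hM₂⟩ := exists_abs_sum_inv_add_log_mertensProduct_sub_le
  refine ⟨M₁ - M₂, 2 + K, fun n hn => ?_⟩
  have hlog : 0 < log n := log_pos (by exact_mod_cast hn)
  calc |log (mertensProduct n) + log (log n) + (M₁ - M₂)|
      = |(∑ p ∈ n.primesLE, (p : ℝ)⁻¹ + log (mertensProduct n) - M₂)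
          - (∑ p ∈ n.primesLE, (p : ℝ)⁻¹ - log (log n) - M₁)| := by ring_nf
    _ ≤ 2 / n + K / log n := (abs_sub _ _).trans (add_le_add (hM₂ n (by lia)) (hM₁ n hn))
    _ ≤ 2 / log n + K / log n := by gcongr; exact log_le_self n.cast_nonneg
    _ = (2 + K) / log n := by ring

end MertensProduct

section AbelianTheorem

open MeasureTheory Set Real Topology

variable {ι : Type*} {a l : ι → ℝ}

theorem norm_ite_le_mul_exp_sub (x y u : ℝ) :
    ‖if y ≤ u then x else 0‖ ≤ exp u * ‖x * exp (-y)‖ := by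
  split_ifs with h
  · calc ‖x‖ ≤ exp (u - y) * ‖x‖ := le_mul_of_one_le_left (norm_nonneg x) (by simpa using h)
      _ = exp u * ‖x * exp (-y)‖ := by
        rw [norm_mul, Real.norm_of_nonneg (exp_nonneg _), sub_eq_add_neg, exp_add]; ring
  · rw [norm_zero]; positivity

theorem summable_ite_le_of_summable_mul_exp (hs : Summable fun i => a i * exp (-l i)) (u : ℝ) :
    Summable fun i => if l i ≤ u then a i else 0 :=
  .of_norm_bounded (hs.norm.mul_left _) fun i => norm_ite_le_mul_exp_sub (a i) (l i) u

theorem exists_forall_abs_tsum_ite_le {L : ℝ} (hs : Summable fun i => a i * exp (-l i))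
    (hL : Tendsto (fun u => ∑' i, if l i ≤ u then a i else 0) atTop (𝓝 L)) :
    ∃ B, ∀ u, |∑' i, if l i ≤ u then a i else 0| ≤ B := by
  obtain ⟨T, hT⟩ := eventually_atTop.1 (hL.abs.eventually_le_const (lt_add_one |L|))
  refine ⟨max (exp T * ∑' i, ‖a i * exp (-l i)‖) (|L| + 1), fun u => ?_⟩
  rcases le_total u T with hu | hu
  · refine le_max_of_le_left ?_
    calc |∑' i, if l i ≤ u then a i else 0| ≤ ∑' i, exp u * ‖a i * exp (-l i)‖ :=
          tsum_of_norm_bounded (hs.norm.mul_left _).hasSum fun i =>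
            norm_ite_le_mul_exp_sub (a i) (l i) u
      _ = exp u * ∑' i, ‖a i * exp (-l i)‖ := tsum_mul_left
      _ ≤ exp T * ∑' i, ‖a i * exp (-l i)‖ := by gcongr
  · exact le_max_of_le_right (hT u hu)

theorem measurable_tsum_ite_le [Countable ι] (hs : Summable fun i => a i * exp (-l i)) :
    Measurable fun u => ∑' i, if l i ≤ u then a i else 0 := by
  refine measurable_of_tendsto_metrizable' atTop
    (f := fun (s : Finset ι) u => ∑ i ∈ s, if l i ≤ u then a i else 0) (fun s => ?_) ?_
  · exact Finset.measurable_fun_sum s fun i _ => measurable_const.ite measurableSet_Ici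
      measurable_const
  · exact tendsto_pi_nhds.2 fun u => (summable_ite_le_of_summable_mul_exp hs u).hasSum

-- Each `exp (-(d * l i))` is the integral of `exp (-v)` over `v ≥ d * l i`.
theorem tsum_mul_exp_neg_mul_eq_integral [Countable ι] (hl : ∀ i, 0 ≤ l i) {d : ℝ} (hd : 0 < d)
    (hs : Summable fun i => a i * exp (-(d * l i))) :
    ∑' i, a i * exp (-(d * l i)) =
      ∫ v in Ioi (0 : ℝ), exp (-v) * ∑' i, if l i ≤ v / d then a i else 0 := by
  set F : ι → ℝ → ℝ := fun i => (Ici (d * l i)).indicator fun v => a i * exp (-v) with hF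
  have integral_indicator (b : ℝ) (i : ι) :
      ∫ v in Ioi (0 : ℝ), (Ici (d * l i)).indicator (fun v => b * exp (-v)) v =
        b * exp (-(d * l i)) := by
    have hdl : 0 ≤ d * l i := mul_nonneg hd.le (hl i)
    rw [← integral_Ici_eq_integral_Ioi, setIntegral_indicator measurableSet_Ici,
      inter_eq_right.2 (Ici_subset_Ici.2 hdl), integral_Ici_eq_integral_Ioi,
      integral_const_mul, integral_exp_neg_Ioi]
  have hF_int (i : ι) : Integrable (F i) (volume.restrict (Ioi 0)) :=
    ((integrableOn_exp_neg_Ioi 0).const_mul (a i)).indicator measurableSet_Ici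
  have hF_norm (i : ι) : ∫ v in Ioi (0 : ℝ), ‖F i v‖ = ‖a i * exp (-(d * l i))‖ := by
    simp only [hF, norm_indicator_eq_indicator_norm, norm_mul, Real.norm_of_nonneg (exp_nonneg _),
      integral_indicator]
  have hsum := hasSum_integral_of_summable_integral_norm hF_int
    (hs.norm.congr fun i => (hF_norm i).symm)
  simp only [hF, integral_indicator] at hsum
  rw [hsum.tsum_eq]
  congr 1 with v
  rw [← tsum_mul_left]
  refine tsum_congr fun i => ?_
  simp only [indicator_apply, mem_Ici, le_div_iff₀' hd]
  split_ifs <;> ring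

theorem tendsto_integral_exp_neg_mul_comp_div {D : ℝ → ℝ} {L B : ℝ} (hD : Measurable D)
    (hB : ∀ u, |D u| ≤ B) (hL : Tendsto D atTop (𝓝 L)) :
    Tendsto (fun d : ℝ => ∫ v in Ioi (0 : ℝ), exp (-v) * D (v / d)) (𝓝[>] 0) (𝓝 L) := by
  have hint : ∫ v in Ioi (0 : ℝ), exp (-v) * L = L := by
    rw [integral_mul_const, integral_exp_neg_Ioi]; simp
  rw [← hint]
  refine tendsto_integral_filter_of_dominated_convergence (fun v => exp (-v) * B) ?_ ?_
    ((integrableOn_exp_neg_Ioi 0).mul_const B) ?_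
  · exact .of_forall fun d => Measurable.aestronglyMeasurable (by fun_prop)
  · refine .of_forall fun d => .of_forall fun v => ?_
    rw [norm_mul, Real.norm_of_nonneg (exp_nonneg _)]
    exact mul_le_mul_of_nonneg_left (hB _) (exp_nonneg _)
  · filter_upwards [ae_restrict_mem measurableSet_Ioi] with v hv
    exact (hL.comp (tendsto_inv_nhdsGT_zero.const_mul_atTop hv)).const_mul _

theorem tendsto_tsum_mul_exp_neg_mul_nhdsGT_zero [Countable ι] {L : ℝ} (hl : ∀ i, 0 ≤ l i)
    (hs : ∀ d, 0 < d → Summable fun i => a i * exp (-(d * l i)))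
    (hL : Tendsto (fun u => ∑' i, if l i ≤ u then a i else 0) atTop (𝓝 L)) :
    Tendsto (fun d => ∑' i, a i * exp (-(d * l i))) (𝓝[>] 0) (𝓝 L) := by
  have hs₁ : Summable fun i => a i * exp (-l i) := by simpa using hs 1 one_pos
  obtain ⟨B, hB⟩ := exists_forall_abs_tsum_ite_le hs₁ hL
  refine (tendsto_integral_exp_neg_mul_comp_div (measurable_tsum_ite_le hs₁) hB hL).congr' ?_
  filter_upwards [self_mem_nhdsWithin] with d hd
  exact (tsum_mul_exp_neg_mul_eq_integral hl hd (hs d hd)).symm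

end AbelianTheorem

section ZetaLogarithm

open Real Topology

theorem hasSum_neg_log_one_sub_primes {f : ℕ →*₀ ℝ} (hf : Summable f) :
    HasSum (fun p : Nat.Primes => -log (1 - f p)) (log (∑' n, f n)) := by
  have hpos (p : Nat.Primes) : 0 < (1 - f p)⁻¹ := by
    have : f p < 1 := (abs_lt.1 (Summable.norm_lt_one (f := f.toMonoidHom) hf p.2.one_lt)).2
    exact inv_pos.2 (sub_pos.2 this)
  have hsum : Summable fun p : Nat.Primes => log (1 - f p)⁻¹ := by
    have hneg : Summable fun p : Nat.Primes => -f p :=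
      (hf.comp_injective Nat.Primes.coe_nat_injective).neg
    simpa only [log_inv, sub_eq_add_neg] using (summable_log_one_add_of_summable hneg).neg
  have htsum : ∑' p : Nat.Primes, log (1 - f p)⁻¹ = log (∑' n, f n) := by
    rw [← (EulerProduct.eulerProduct_completely_multiplicative_hasProd hf.norm).tprod_eq,
      ← rexp_tsum_eq_tprod hpos hsum, log_exp]
  rw [← htsum]
  simpa only [log_inv] using hsum.hasSum

theorem hasSum_neg_log_one_sub_rpow_primes {s : ℝ} (hs : 1 < s) :
    HasSum (fun p : Nat.Primes => -log (1 - (p : ℝ) ^ (-s))) (log (∑' n : ℕ, 1 / (n : ℝ) ^ s)) := by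
  let f : ℕ →*₀ ℝ :=
    { toFun n := (n : ℝ) ^ (-s)
      map_zero' := by simp [zero_rpow (show -s ≠ 0 by linarith)]
      map_one' := by simp
      map_mul' m n := by push_cast; exact mul_rpow (by positivity) (by positivity) }
  have hf (n : ℕ) : f n = (n : ℝ) ^ (-s) := rfl
  have hsum : Summable f := summable_nat_rpow.2 (neg_lt_neg hs)
  simpa only [hf, rpow_neg (Nat.cast_nonneg _), one_div] using hasSum_neg_log_one_sub_primes hsum

theorem tendsto_one_sub_exp_neg_div_nhdsGT_zero :
    Tendsto (fun d : ℝ => (1 - exp (-d)) / d) (𝓝[>] 0) (𝓝 1) := by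
  have hderiv : HasDerivAt (fun d : ℝ => 1 - exp (-d)) 1 0 := by
    simpa using ((hasDerivAt_neg (0 : ℝ)).exp).const_sub 1
  refine hderiv.tendsto_slope_zero_right.congr fun d => ?_
  simp [div_eq_inv_mul]

theorem tendsto_mul_tsum_nat_rpow_nhdsGT_zero :
    Tendsto (fun d : ℝ => d * ∑' n : ℕ, 1 / (n : ℝ) ^ (1 + d)) (𝓝[>] 0) (𝓝 1) := by
  have hshift : Tendsto (fun d : ℝ => 1 + d) (𝓝[>] 0) (𝓝[>] 1) := by
    refine tendsto_nhdsWithin_iff.2 ⟨?_, ?_⟩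
    · simpa using ((continuous_const_add (1 : ℝ)).tendsto 0).mono_left nhdsWithin_le_nhds
    · filter_upwards [self_mem_nhdsWithin] with d (hd : 0 < d)
      simpa using hd
  refine (tendsto_sub_mul_tsum_nat_rpow.comp hshift).congr fun d => ?_
  simp

theorem tendsto_log_tsum_nat_rpow_add_log_one_sub_exp_neg :
    Tendsto (fun d : ℝ => log (∑' n : ℕ, 1 / (n : ℝ) ^ (1 + d)) + log (1 - exp (-d)))
      (𝓝[>] 0) (𝓝 0) := by
  have hmul := tendsto_mul_tsum_nat_rpow_nhdsGT_zero.mul tendsto_one_sub_exp_neg_div_nhdsGT_zero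
  rw [one_mul] at hmul
  have hlog := hmul.log one_ne_zero
  rw [log_one] at hlog
  refine hlog.congr' ?_
  filter_upwards [self_mem_nhdsWithin, hmul.eventually_ne one_ne_zero] with d (hd : 0 < d) hne
  rw [← log_mul (right_ne_zero_of_mul (left_ne_zero_of_mul hne))
    (div_ne_zero_iff.1 (right_ne_zero_of_mul hne)).1]
  congr 1
  field_simp

end ZetaLogarithm

section MertensConstant

open Real Topology

theorem tendsto_log_sub_log_of_tendsto_div_one {α : Type*} {F : Filter α} {f g : α → ℝ}
    (h : Tendsto (fun x => f x / g x) F (𝓝 1)) :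
    Tendsto (fun x => log (f x) - log (g x)) F (𝓝 0) := by
  have hlog := h.log one_ne_zero
  rw [log_one] at hlog
  refine hlog.congr' ((h.eventually_ne one_ne_zero).mono fun x hx => ?_)
  have ⟨hf, hg⟩ := div_ne_zero_iff.1 hx
  exact log_div hf hg

theorem tendsto_log_natFloor_sub_log : Tendsto (fun u : ℝ => log ⌊u⌋₊ - log u) atTop (𝓝 0) :=
  tendsto_log_sub_log_of_tendsto_div_one tendsto_nat_floor_div_atTop

theorem tendsto_log_log_natFloor_exp_sub_log :
    Tendsto (fun u : ℝ => log (log ⌊exp u⌋₊) - log u) atTop (𝓝 0) := by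
  have hsub : Tendsto (fun u : ℝ => log ⌊exp u⌋₊ - u) atTop (𝓝 0) := by
    simpa [Function.comp_def] using tendsto_log_natFloor_sub_log.comp tendsto_exp_atTop
  refine tendsto_log_sub_log_of_tendsto_div_one ?_
  have hdiv := (hsub.div_atTop tendsto_id).add_const 1
  rw [zero_add] at hdiv
  refine hdiv.congr' ?_
  filter_upwards [eventually_ne_atTop 0] with u hu
  simp only [id]
  field_simp
  ring

theorem log_natCast_le_iff_le_floor_exp {n : ℕ} (hn : n ≠ 0) (u : ℝ) :
    log n ≤ u ↔ n ≤ ⌊exp u⌋₊ := by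
  rw [log_le_iff_le_exp (by positivity), Nat.le_floor_iff (exp_nonneg u)]

theorem tsum_primes_ite_log_le (f : ℕ → ℝ) (u : ℝ) :
    (∑' p : Nat.Primes, if log p ≤ u then f p else 0) = ∑ p ∈ ⌊exp u⌋₊.primesLE, f p := by
  rw [Nat.Primes.tsum_eq_tsum_ite (fun n : ℕ => if log n ≤ u then f n else 0),
    ← sum_range_succ_ite_prime, tsum_eq_sum (s := Finset.range (⌊exp u⌋₊ + 1))]
  · refine Finset.sum_congr rfl fun n hn => ?_
    split_ifs with hp hu
    · rfl
    · rw [log_natCast_le_iff_le_floor_exp hp.ne_zero] at hu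
      exact absurd (Finset.mem_range_succ_iff.1 hn) hu
    · rfl
  · intro n hn
    split_ifs with hp hu
    · rw [log_natCast_le_iff_le_floor_exp hp.ne_zero] at hu
      exact absurd (Finset.mem_range_succ_iff.2 hu) hn
    all_goals rfl

theorem tsum_ite_succ_le_eq_harmonic (u : ℝ) :
    (∑' n : ℕ, if (n + 1 : ℝ) ≤ u then (n + 1 : ℝ)⁻¹ else 0) = harmonic ⌊u⌋₊ := by
  have hiff (n : ℕ) : (n + 1 : ℝ) ≤ u ↔ n < ⌊u⌋₊ := by
    rw [← Nat.succ_le_iff, Nat.le_floor_iff' n.succ_ne_zero, Nat.cast_succ]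
  simp only [hiff]
  rw [tsum_eq_sum (s := Finset.range ⌊u⌋₊) fun n hn => if_neg (by simpa using hn), harmonic]
  push_cast
  exact Finset.sum_congr rfl fun n hn => if_pos (Finset.mem_range.1 hn)

theorem hasSum_inv_mul_exp_neg_mul {d : ℝ} (hd : 0 < d) :
    HasSum (fun n : ℕ => (n + 1 : ℝ)⁻¹ * exp (-(d * (n + 1)))) (-log (1 - exp (-d))) := by
  have hlt : |exp (-d)| < 1 := by simpa [abs_of_pos (exp_pos _)] using hd
  refine (hasSum_pow_div_log_of_abs_lt_one hlt).congr_fun fun n => ?_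
  rw [← exp_nat_mul]
  push_cast
  ring_nf

theorem tendsto_log_mertensProduct_add_harmonic {C : ℝ}
    (hC : Tendsto (fun n : ℕ => log (mertensProduct n) + log (log n) + C) atTop (𝓝 0)) :
    Tendsto (fun u : ℝ => log (mertensProduct ⌊exp u⌋₊) + harmonic ⌊u⌋₊) atTop
      (𝓝 (eulerMascheroniConstant - C)) := by
  have hprod := hC.comp (tendsto_nat_floor_atTop.comp tendsto_exp_atTop)
  have hharm := tendsto_harmonic_sub_log.comp (tendsto_nat_floor_atTop (α := ℝ))
  have h := (((hprod.add hharm).sub tendsto_log_log_natFloor_exp_sub_log).add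
    tendsto_log_natFloor_sub_log).sub_const C
  simp only [zero_add, sub_zero, add_zero] at h
  refine h.congr fun u => ?_
  simp only [Function.comp_apply]
  ring

theorem abs_mul_log_one_sub_sub_log_one_sub_mul_le {x t : ℝ} (hx : |x| ≤ 1 / 2) (ht : |t| ≤ 1) :
    |t * log (1 - x) - log (1 - t * x)| ≤ 4 * x ^ 2 := by
  have htx : |t * x| ≤ |x| := by
    rw [abs_mul]; exact mul_le_of_le_one_left (abs_nonneg x) ht
  calc |t * log (1 - x) - log (1 - t * x)|
      = |t * (x + log (1 - x)) - (t * x + log (1 - t * x))| := by ring_nf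
    _ ≤ |t| * |x + log (1 - x)| + |t * x + log (1 - t * x)| := by
        rw [← abs_mul]; exact abs_sub _ _
    _ ≤ 1 * (2 * x ^ 2) + 2 * (t * x) ^ 2 := by
        gcongr
        · exact abs_add_log_one_sub_le hx
        · exact abs_add_log_one_sub_le (htx.trans hx)
    _ ≤ 1 * (2 * x ^ 2) + 2 * x ^ 2 := by gcongr 1 * _ + 2 * ?_; exact sq_le_sq.2 htx
    _ = 4 * x ^ 2 := by ring

theorem rpow_neg_one_add_eq_exp_mul_inv {x : ℝ} (hx : 0 < x) (d : ℝ) :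
    x ^ (-(1 + d)) = exp (-(d * log x)) * x⁻¹ := by
  rw [neg_add, rpow_add hx, rpow_neg_one, rpow_def_of_pos hx, mul_comm, mul_neg, mul_comm d]

theorem abs_exp_mul_log_one_sub_inv_sub_log_one_sub_rpow_le (p : Nat.Primes) {d : ℝ}
    (hd : 0 ≤ d) :
    |log (1 - (p : ℝ)⁻¹) * exp (-(d * log p)) - log (1 - (p : ℝ) ^ (-(1 + d)))| ≤
      4 * (p : ℝ) ^ (-2 : ℝ) := by
  have hp0 : (0 : ℝ) < p := by exact_mod_cast p.2.pos
  rw [rpow_neg_one_add_eq_exp_mul_inv hp0, mul_comm (log _), rpow_neg hp0.le, rpow_two, ← inv_pow]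
  refine abs_mul_log_one_sub_sub_log_one_sub_mul_le ?_ ?_
  · rw [abs_of_pos (inv_pos.2 hp0)]
    exact inv_prime_le_half p.2
  · rw [abs_of_pos (exp_pos _), exp_le_one_iff, neg_nonpos]
    exact mul_nonneg hd (log_natCast_nonneg p)

theorem summable_four_mul_primes_rpow_neg_two :
    Summable fun p : Nat.Primes => 4 * (p : ℝ) ^ (-2 : ℝ) :=
  (Nat.Primes.summable_rpow.2 (by norm_num)).mul_left 4

theorem summable_log_one_sub_inv_mul_exp {d : ℝ} (hd : 0 < d) :
    Summable fun p : Nat.Primes => log (1 - (p : ℝ)⁻¹) * exp (-(d * log p)) := by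
  have hdiff : Summable fun p : Nat.Primes =>
      log (1 - (p : ℝ)⁻¹) * exp (-(d * log p)) - log (1 - (p : ℝ) ^ (-(1 + d))) :=
    .of_norm_bounded summable_four_mul_primes_rpow_neg_two fun p =>
      abs_exp_mul_log_one_sub_inv_sub_log_one_sub_rpow_le p hd.le
  have hsum := (hasSum_neg_log_one_sub_rpow_primes (lt_add_of_pos_right 1 hd)).summable
  exact (hdiff.sub hsum).congr fun p => by ring

theorem tendsto_tsum_log_one_sub_inv_mul_exp_add_log_tsum :
    Tendsto (fun d : ℝ => ∑' p : Nat.Primes, log (1 - (p : ℝ)⁻¹) * exp (-(d * log p)) +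
        log (∑' n : ℕ, 1 / (n : ℝ) ^ (1 + d))) (𝓝[>] 0) (𝓝 0) := by
  have hlim : Tendsto (fun d : ℝ => ∑' p : Nat.Primes,
      (log (1 - (p : ℝ)⁻¹) * exp (-(d * log p)) - log (1 - (p : ℝ) ^ (-(1 + d)))))
      (𝓝[>] 0) (𝓝 (∑' _ : Nat.Primes, 0)) := by
    refine tendsto_tsum_of_dominated_convergence summable_four_mul_primes_rpow_neg_two
      (fun p => ?_) ?_
    · have hp0 : (0 : ℝ) < p := by exact_mod_cast p.2.pos
      have hcont : ContinuousAt (fun d : ℝ =>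
          log (1 - (p : ℝ)⁻¹) * exp (-(d * log p)) -
            log (1 - exp (-(d * log p)) * (p : ℝ)⁻¹)) 0 := by
        refine ContinuousAt.sub (by fun_prop) (ContinuousAt.log (by fun_prop) ?_)
        simpa using (one_sub_inv_prime_pos p.2).ne'
      simp only [rpow_neg_one_add_eq_exp_mul_inv hp0]
      simpa using hcont.tendsto.mono_left (nhdsWithin_le_nhds (s := Set.Ioi 0))
    · filter_upwards [self_mem_nhdsWithin] with d (hd : 0 < d) p
      exact abs_exp_mul_log_one_sub_inv_sub_log_one_sub_rpow_le p hd.le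
  rw [tsum_zero] at hlim
  refine hlim.congr' ?_
  filter_upwards [self_mem_nhdsWithin] with d (hd : 0 < d)
  have hsum := hasSum_neg_log_one_sub_rpow_primes (lt_add_of_pos_right 1 hd)
  rw [← hsum.tsum_eq, ← (summable_log_one_sub_inv_mul_exp hd).tsum_add hsum.summable]
  simp only [sub_eq_add_neg]

-- The Abelian theorem applies to both series at once: separately their partial sums diverge.
theorem tendsto_tsum_log_one_sub_inv_mul_exp_sub_log_one_sub_exp {C : ℝ}
    (hC : Tendsto (fun n : ℕ => log (mertensProduct n) + log (log n) + C) atTop (𝓝 0)) :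
    Tendsto (fun d : ℝ => ∑' p : Nat.Primes, log (1 - (p : ℝ)⁻¹) * exp (-(d * log p)) -
      log (1 - exp (-d))) (𝓝[>] 0) (𝓝 (eulerMascheroniConstant - C)) := by
  let a : Nat.Primes ⊕ ℕ → ℝ := Sum.elim (fun p => log (1 - (p : ℝ)⁻¹)) fun n => (n + 1 : ℝ)⁻¹
  let l : Nat.Primes ⊕ ℕ → ℝ := Sum.elim (fun p => log p) fun n => n + 1
  have hl : ∀ i, 0 ≤ l i := Sum.rec (fun p => log_natCast_nonneg p) fun n => by
    change (0 : ℝ) ≤ n + 1; positivity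
  have hsum (d : ℝ) (hd : 0 < d) : HasSum (fun i => a i * exp (-(d * l i)))
      (∑' p : Nat.Primes, log (1 - (p : ℝ)⁻¹) * exp (-(d * log p)) - log (1 - exp (-d))) :=
    (summable_log_one_sub_inv_mul_exp hd).hasSum.sum (hasSum_inv_mul_exp_neg_mul hd)
  have hpartial (u : ℝ) : ∑' i, (if l i ≤ u then a i else 0) =
      log (mertensProduct ⌊exp u⌋₊) + harmonic ⌊u⌋₊ := by
    have hs : Summable fun i => if l i ≤ u then a i else 0 :=
      summable_ite_le_of_summable_mul_exp (by simpa using (hsum 1 one_pos).summable) u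
    rw [Summable.tsum_sum (hs.comp_injective Sum.inl_injective)
      (hs.comp_injective Sum.inr_injective), log_mertensProduct,
      ← tsum_primes_ite_log_le fun p => log (1 - (p : ℝ)⁻¹), ← tsum_ite_succ_le_eq_harmonic]
    rfl
  refine (tendsto_tsum_mul_exp_neg_mul_nhdsGT_zero hl (fun d hd => (hsum d hd).summable)
    ((tendsto_log_mertensProduct_add_harmonic hC).congr fun u => (hpartial u).symm)).congr' ?_
  filter_upwards [self_mem_nhdsWithin] with d hd
  exact (hsum d hd).tsum_eq

theorem eq_eulerMascheroniConstant_of_tendsto_log_mertensProduct {C : ℝ}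
    (hC : Tendsto (fun n : ℕ => log (mertensProduct n) + log (log n) + C) atTop (𝓝 0)) :
    C = eulerMascheroniConstant := by
  have h := tendsto_nhds_unique
    (tendsto_tsum_log_one_sub_inv_mul_exp_sub_log_one_sub_exp hC)
    ((tendsto_tsum_log_one_sub_inv_mul_exp_add_log_tsum.sub
      tendsto_log_tsum_nat_rpow_add_log_one_sub_exp_neg).congr fun d => by ring)
  linarith

theorem mertens_third :
    ∃ K : ℝ, ∀ n : ℕ, 2 ≤ n →
      |log (mertensProduct n * (exp eulerMascheroniConstant * log n))| ≤ K / log n := by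
  obtain ⟨C, K, hK⟩ := exists_abs_log_mertensProduct_add_log_log_add_le
  have hC : Tendsto (fun n : ℕ => log (mertensProduct n) + log (log n) + C) atTop (𝓝 0) :=
    squeeze_zero_norm' ((eventually_ge_atTop 2).mono hK)
      ((tendsto_log_atTop.comp tendsto_natCast_atTop_atTop).const_div_atTop K)
  refine ⟨K, fun n hn => ?_⟩
  have hlog : log n ≠ 0 := (log_pos (by exact_mod_cast hn)).ne'
  rw [log_mul (mertensProduct_pos n).ne' (by positivity), log_mul (by positivity) hlog, log_exp,
    ← eq_eulerMascheroniConstant_of_tendsto_log_mertensProduct hC, add_comm C, ← add_assoc]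
  exact hK n hn

end MertensConstant

section ResidueCounting

open Finset Topology

theorem abs_card_filter_intCast_eq_sub_le {Q : ℕ} [NeZero Q] (r : ZMod Q) (N : ℕ) :
    |(#{x ∈ Finset.Ioc (0 : ℤ) N | ((x : ℤ) : ZMod Q) = r} : ℝ) - N / Q| ≤ 1 := by
  have hset : {x ∈ Finset.Ioc (0 : ℤ) N | ((x : ℤ) : ZMod Q) = r} =
      {x ∈ Finset.Ioc (0 : ℤ) N | x ≡ (r.val : ℤ) [ZMOD Q]} := by
    refine Finset.filter_congr fun x _ => ?_
    rw [← ZMod.intCast_eq_intCast_iff]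
    simp
  have hQ : (0 : ℤ) < Q := by exact_mod_cast NeZero.pos Q
  have hcard := Int.Ioc_filter_modEq_card 0 N hQ (r.val : ℤ)
  have hdiff : ((N : ℤ) - (r.val : ℤ) : ℚ) / (Q : ℤ) - ((0 : ℤ) - (r.val : ℤ) : ℚ) / (Q : ℤ) =
      (N : ℚ) / Q := by push_cast; ring
  have hnonneg : (0 : ℚ) ≤ N / Q := by positivity
  rw [← hset] at hcard
  generalize ((N : ℤ) - (r.val : ℤ) : ℚ) / (Q : ℤ) = u at hcard hdiff
  generalize ((0 : ℤ) - (r.val : ℤ) : ℚ) / (Q : ℤ) = w at hcard hdiff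
  rw [max_eq_left (sub_nonneg.2 (Int.floor_le_floor (by linarith)))] at hcard
  have hbound : |(#{x ∈ Finset.Ioc (0 : ℤ) N | ((x : ℤ) : ZMod Q) = r} : ℚ) - N / Q| ≤ 1 := by
    rw [← Int.cast_natCast, hcard, Int.cast_sub, abs_le]
    constructor <;>
      linarith [Int.floor_le u, Int.lt_floor_add_one u, Int.floor_le w, Int.lt_floor_add_one w]
  have hreal := (Rat.cast_le (K := ℝ)).2 hbound
  push_cast at hreal
  exact hreal

theorem tendsto_card_filter_intCast_eq_div {Q : ℕ} [NeZero Q] (r : ZMod Q) :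
    Tendsto (fun N : ℕ => (#{x ∈ Finset.Ioc (0 : ℤ) N | ((x : ℤ) : ZMod Q) = r} : ℝ) / N)
      atTop (𝓝 (Q : ℝ)⁻¹) := by
  rw [tendsto_iff_dist_tendsto_zero]
  refine squeeze_zero' (.of_forall fun _ => dist_nonneg) ?_ tendsto_one_div_atTop_nhds_zero_nat
  filter_upwards [eventually_gt_atTop 0] with N hN
  have hN' : (0 : ℝ) < N := by exact_mod_cast hN
  have hscale : (#{x ∈ Finset.Ioc (0 : ℤ) N | ((x : ℤ) : ZMod Q) = r} : ℝ) / N - (Q : ℝ)⁻¹ =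
      (#{x ∈ Finset.Ioc (0 : ℤ) N | ((x : ℤ) : ZMod Q) = r} - N / Q) / N := by field_simp
  rw [Real.dist_eq, hscale, abs_div, abs_of_pos hN']
  gcongr
  exact abs_card_filter_intCast_eq_sub_le r N

variable {ι S : Type*} [Fintype S] {q : S → ℕ}

theorem natCard_prodEquivPi_comp_mem (hq : Pairwise fun s t => (q s).Coprime (q t))
    (B : ∀ s, Set (ι → ZMod (q s))) :
    Nat.card {g : ι → ZMod (∏ s, q s) | ∀ s, (fun i => ZMod.prodEquivPi q hq (g i) s) ∈ B s} =
      ∏ s, Nat.card (B s) := by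
  rw [← Nat.card_pi, ← Nat.card_congr (Equiv.subtypePiEquivPi (p := fun s f => f ∈ B s))]
  exact Nat.card_congr (((Equiv.piCongrRight fun _ => (ZMod.prodEquivPi q hq).toEquiv).trans
    (Equiv.piComm _)).subtypeEquiv fun _ => Iff.rfl)

variable [Fintype ι]

theorem card_filter_intCast_comp_mem [DecidableEq ι] {Q : ℕ}
    (A : Finset (ι → ZMod Q)) (N : ℕ) :
    #{h ∈ Fintype.piFinset fun _ : ι => Finset.Ioc (0 : ℤ) N | (fun i => (h i : ZMod Q)) ∈ A} =
      ∑ g ∈ A, ∏ i, #{x ∈ Finset.Ioc (0 : ℤ) N | ((x : ℤ) : ZMod Q) = g i} := by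
  classical
  rw [Finset.card_eq_sum_card_fiberwise (f := fun h : ι → ℤ => fun i => (h i : ZMod Q)) (t := A)
    (by intro h hh; exact (Finset.mem_filter.1 hh).2)]
  refine Finset.sum_congr rfl fun g hg => ?_
  rw [← Fintype.card_piFinset]
  congr 1
  ext h
  simp only [Finset.mem_filter, Fintype.mem_piFinset, funext_iff, forall_and]
  refine ⟨fun ⟨⟨hN, _⟩, hg'⟩ => ⟨hN, hg'⟩, fun ⟨hN, hg'⟩ => ⟨⟨hN, ?_⟩, hg'⟩⟩
  rwa [funext hg']

theorem tendsto_natCard_intCast_comp_mem_div {Q : ℕ} [NeZero Q] (A : Set (ι → ZMod Q)) :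
    Tendsto (fun N : ℕ => (Nat.card {h : ι → ℤ // (∀ i, 1 ≤ h i ∧ h i ≤ (N : ℤ)) ∧
        (fun i => (h i : ZMod Q)) ∈ A} : ℝ) / (N : ℝ) ^ Fintype.card ι)
      atTop (𝓝 (Nat.card A / (Q : ℝ) ^ Fintype.card ι)) := by
  classical
  have hlim : Tendsto (fun N : ℕ => ∑ g ∈ A.toFinset, ∏ i,
      (#{x ∈ Finset.Ioc (0 : ℤ) N | ((x : ℤ) : ZMod Q) = g i} : ℝ) / N) atTop
      (𝓝 (∑ _g ∈ A.toFinset, ∏ _i : ι, (Q : ℝ)⁻¹)) :=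
    tendsto_finsetSum _ fun g _ => tendsto_finsetProd _ fun i _ =>
      tendsto_card_filter_intCast_eq_div (g i)
  convert hlim using 2 with N
  · simp only [Finset.prod_div_distrib, Finset.prod_const, ← Finset.sum_div, Finset.card_univ]
    congr 1
    rw_mod_cast [← card_filter_intCast_comp_mem]
    refine Nat.subtype_card _ fun h => ?_
    simp [Fintype.mem_piFinset, Order.one_le_iff_pos, and_comm]
  · simp [div_eq_mul_inv]

theorem tendsto_natCard_forall_intCast_comp_mem_div [∀ s, NeZero (q s)]
    (hq : Pairwise fun s t => (q s).Coprime (q t)) (B : ∀ s, Set (ι → ZMod (q s))) :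
    Tendsto (fun N : ℕ => (Nat.card {h : ι → ℤ // (∀ i, 1 ≤ h i ∧ h i ≤ (N : ℤ)) ∧
        ∀ s, (fun i => (h i : ZMod (q s))) ∈ B s} : ℝ) / (N : ℝ) ^ Fintype.card ι)
      atTop (𝓝 (∏ s, Nat.card (B s) / (q s : ℝ) ^ Fintype.card ι)) := by
  have : NeZero (∏ s, q s) := ⟨Finset.prod_ne_zero_iff.2 fun s _ => NeZero.ne (q s)⟩
  have hlim := tendsto_natCard_intCast_comp_mem_div
    {g : ι → ZMod (∏ s, q s) | ∀ s, (fun i => ZMod.prodEquivPi q hq (g i) s) ∈ B s}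
  rw [natCard_prodEquivPi_comp_mem hq B, Nat.cast_prod, Nat.cast_prod, ← Finset.prod_pow,
    ← Finset.prod_div_distrib] at hlim
  simpa only [Set.mem_ofPred_eq, map_intCast, Pi.intCast_apply] using hlim

end ResidueCounting

section AdmissibleDensity

open Topology

/-- The proportion of non-surjective maps among all maps from `ι` to `α`. -/
noncomputable def nonsurjDensity (ι α : Type*) : ℝ :=
  Nat.card {f : ι → α // ¬ f.Surjective} / (Nat.card α : ℝ) ^ Nat.card ι

/-- The limiting density `ρ_ad(m)` of admissible `m`-tuples, as a product of local densities; the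
primes `p > m` are left out because no `m`-tuple covers `ZMod p`. -/
noncomputable def admDensity (m : ℕ) : ℝ :=
  ∏ p ∈ m.primesLE, nonsurjDensity (Fin m) (ZMod p)

theorem admissibleTuple_iff_forall_primesLE {m : ℕ} (h : Fin m → ℤ) :
    AdmissibleTuple h ↔
      ∀ p : m.primesLE, ¬ (fun i => (h i : ZMod p)).Surjective := by
  have hmiss (p : ℕ) : (∃ r : ZMod p, ∀ i, (h i : ZMod p) ≠ r) ↔
      ¬ (fun i => (h i : ZMod p)).Surjective := by
    simp [Function.Surjective]
  simp only [AdmissibleTuple, hmiss]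
  refine ⟨fun hadm p => hadm p (Nat.mem_primesLE.1 p.2).2, fun hadm p hp hsurj => ?_⟩
  have : NeZero p := ⟨hp.ne_zero⟩
  have hpm : p ≤ m := by simpa using Fintype.card_le_of_surjective _ hsurj
  exact hadm ⟨p, Nat.mem_primesLE.2 ⟨hpm, hp⟩⟩ hsurj

theorem tendsto_admCount_div_pow (m : ℕ) :
    Tendsto (fun N : ℕ => (admCount m N : ℝ) / (N : ℝ) ^ m) atTop (𝓝 (admDensity m)) := by
  have hprime (p : m.primesLE) : (p : ℕ).Prime := (Nat.mem_primesLE.1 p.2).2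
  have (p : m.primesLE) : NeZero (p : ℕ) := ⟨(hprime p).ne_zero⟩
  have hcop : Pairwise fun p p' : m.primesLE => (p : ℕ).Coprime p' := fun p p' hne =>
    (Nat.coprime_primes (hprime p) (hprime p')).2 (Subtype.coe_ne_coe.2 hne)
  have hlim := tendsto_natCard_forall_intCast_comp_mem_div hcop
    fun p => {f : Fin m → ZMod p | ¬ f.Surjective}
  convert hlim using 2 with N
  · simp [admCount, admissibleTuple_iff_forall_primesLE]
  · rw [admDensity, ← Finset.prod_coe_sort]
    simp only [nonsurjDensity, Nat.card_zmod, Nat.card_eq_fintype_card (α := Fin m),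
      Fintype.card_fin]
    rfl

theorem nonsurjDensity_nonneg (ι α : Type*) : 0 ≤ nonsurjDensity ι α := by
  unfold nonsurjDensity; positivity

variable {ι α : Type*} [Finite ι] [Finite α]

theorem natCard_pi_ne (a : α) :
    Nat.card {f : ι → α // ∀ i, f i ≠ a} = (Nat.card α - 1) ^ Nat.card ι := by
  have := Fintype.ofFinite ι
  have := Fintype.ofFinite α
  classical
  rw [Nat.card_congr (Equiv.subtypePiEquivPi (p := fun _ x => x ≠ a)), Nat.card_pi]
  simp [Nat.card_eq_fintype_card]

theorem nonsurjDensity_le_one : nonsurjDensity ι α ≤ 1 := by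
  refine div_le_one_of_le₀ ?_ (by positivity)
  have h := Nat.card_le_card_of_injective _
    (Subtype.val_injective (p := fun f : ι → α => ¬ f.Surjective))
  rw [Nat.card_fun] at h
  exact_mod_cast h

theorem one_sub_inv_pow_eq_div [Nonempty α] (k : ℕ) :
    (1 - (Nat.card α : ℝ)⁻¹) ^ k = ((Nat.card α - 1 : ℕ) ^ k : ℝ) / (Nat.card α : ℝ) ^ k := by
  have hα : 0 < Nat.card α := Nat.card_pos
  rw [Nat.cast_pred hα, ← div_pow, sub_div, div_self (by positivity), one_div]

theorem one_sub_inv_pow_le_nonsurjDensity [Nonempty α] :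
    (1 - (Nat.card α : ℝ)⁻¹) ^ Nat.card ι ≤ nonsurjDensity ι α := by
  rw [one_sub_inv_pow_eq_div, nonsurjDensity, ← Nat.cast_pow,
    ← natCard_pi_ne (Classical.arbitrary α)]
  gcongr
  refine Nat.card_mono (Set.toFinite {f : ι → α | ¬ f.Surjective}) fun f hf hsurj => ?_
  exact (hsurj (Classical.arbitrary α)).elim hf

theorem nonsurjDensity_le_mul_one_sub_inv_pow [Nonempty α] :
    nonsurjDensity ι α ≤ Nat.card α * (1 - (Nat.card α : ℝ)⁻¹) ^ Nat.card ι := by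
  have := Fintype.ofFinite α
  let forget : (Σ a : α, {f : ι → α // ∀ i, f i ≠ a}) → {f : ι → α // ¬ f.Surjective} :=
    fun x => ⟨x.2.1, fun hsurj => (hsurj x.1).elim x.2.2⟩
  have hforget : forget.Surjective := fun ⟨f, hf⟩ => by
    obtain ⟨a, ha⟩ := not_forall.1 hf
    exact ⟨⟨a, f, not_exists.1 ha⟩, rfl⟩
  have hcard := Nat.card_le_card_of_surjective forget hforget
  simp only [Nat.card_sigma, natCard_pi_ne, Finset.sum_const, Finset.card_univ,
    ← Nat.card_eq_fintype_card, smul_eq_mul] at hcard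
  rw [one_sub_inv_pow_eq_div, nonsurjDensity, ← mul_div_assoc]
  gcongr
  exact_mod_cast hcard

theorem mertensProduct_pow_le_admDensity (m : ℕ) : mertensProduct m ^ m ≤ admDensity m := by
  rw [mertensProduct, ← Finset.prod_pow, admDensity]
  refine Finset.prod_le_prod (fun p hp => ?_) fun p hp => ?_
  · exact pow_nonneg (one_sub_inv_prime_pos (Nat.mem_primesLE.1 hp).2).le m
  · have : NeZero p := ⟨(Nat.mem_primesLE.1 hp).2.ne_zero⟩
    simpa using one_sub_inv_pow_le_nonsurjDensity (ι := Fin m) (α := ZMod p)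

theorem admDensity_le_primorial_mul_mertensProduct_pow {m n : ℕ} (hnm : n ≤ m) :
    admDensity m ≤ primorial n * mertensProduct n ^ m := by
  have hne {k p : ℕ} (hp : p ∈ k.primesLE) : NeZero p := ⟨(Nat.mem_primesLE.1 hp).2.ne_zero⟩
  calc admDensity m ≤ ∏ p ∈ n.primesLE, nonsurjDensity (Fin m) (ZMod p) :=
        Finset.prod_le_prod_of_subset_of_le_one (Nat.primesLE_mono hnm)
          (fun p _ => nonsurjDensity_nonneg _ _)
          fun p hp _ => have := hne hp; nonsurjDensity_le_one
    _ ≤ ∏ p ∈ n.primesLE, p * (1 - (p : ℝ)⁻¹) ^ m := by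
        refine Finset.prod_le_prod (fun p _ => nonsurjDensity_nonneg _ _) fun p hp => ?_
        have := hne hp
        simpa using nonsurjDensity_le_mul_one_sub_inv_pow (ι := Fin m) (α := ZMod p)
    _ = primorial n * mertensProduct n ^ m := by
        rw [Finset.prod_mul_distrib, Finset.prod_pow, mertensProduct,
          primorial_eq_prod_primesLE, Nat.cast_prod]

end AdmissibleDensity

section Bounds

open Real

theorem one_lt_log_of_three_le {x : ℝ} (hx : 3 ≤ x) : 1 < log x :=
  (lt_log_iff_exp_lt (by linarith)).2 (exp_one_lt_three.trans_le hx)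

theorem log_log_le_half_log {x : ℝ} (hx : 1 < x) : log (log x) ≤ log x / 2 := by
  have hlog : 0 < log x := log_pos hx
  have h := log_le_sub_one_of_pos (half_pos hlog)
  rw [log_div hlog.ne' two_ne_zero] at h
  linarith [log_two_lt_d9]

theorem half_log_le_log_of_div_log_le {x y : ℝ} (hx : 1 < x) (hy : x / log x ≤ y) :
    log x / 2 ≤ log y := by
  have hlog : 0 < log x := log_pos hx
  have h := log_le_log (by positivity) hy
  rw [log_div (by positivity) hlog.ne'] at h
  linarith [log_log_le_half_log hx]

theorem log_log_sub_log_log_le_of_div_log_le {x y : ℝ} (hx : 3 ≤ x) (hy : x / log x ≤ y) :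
    log (log x) - log (log y) ≤ 2 * log (log x) / log x := by
  have hlogx : 1 < log x := one_lt_log_of_three_le hx
  have hhalf := half_log_le_log_of_div_log_le (by linarith) hy
  have hlogy : 0 < log y := by linarith
  have hdiff : log x - log y ≤ log (log x) := by
    have h := log_le_log (by positivity) hy
    rw [log_div (by positivity) (by positivity)] at h
    linarith
  have hloglog : 0 ≤ log (log x) := log_nonneg hlogx.le
  calc log (log x) - log (log y) = log (log x / log y) :=
        (log_div (by positivity) hlogy.ne').symm
    _ ≤ log x / log y - 1 := log_le_sub_one_of_pos (by positivity)
    _ = (log x - log y) / log y := by field_simp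
    _ ≤ log (log x) / (log x / 2) := by gcongr
    _ = 2 * log (log x) / log x := by field_simp

theorem one_lt_div_log {x : ℝ} (hx : 1 < x) : 1 < x / log x :=
  (one_lt_div (log_pos hx)).2 ((log_le_sub_one_of_pos (by linarith)).trans_lt (by linarith))

theorem log_primorial_le (n : ℕ) : log (primorial n) ≤ n * log 4 := by
  rw [← log_pow]
  exact log_le_log (by exact_mod_cast primorial_pos n) (by exact_mod_cast primorial_le_four_pow n)

theorem admDensity_pos (m : ℕ) : 0 < admDensity m :=
  (pow_pos (mertensProduct_pos m) m).trans_le (mertensProduct_pow_le_admDensity m)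

theorem exists_neg_mul_div_log_le_log_admDensity_mul : ∃ K : ℝ, 0 ≤ K ∧ ∀ m : ℕ, 2 ≤ m →
    -(K * (m / log m)) ≤ log (admDensity m * (exp eulerMascheroniConstant * log m) ^ m) := by
  obtain ⟨K, hK⟩ := mertens_third
  refine ⟨|K|, abs_nonneg K, fun m hm => ?_⟩
  have hlog : 0 < log m := log_pos (by exact_mod_cast hm)
  have hpos := mertensProduct_pos m
  calc -(|K| * (m / log m)) = m * -(|K| / log m) := by ring
    _ ≤ m * -(K / log m) := by gcongr; exact le_abs_self K
    _ ≤ m * log (mertensProduct m * (exp eulerMascheroniConstant * log m)) := by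
        gcongr; exact neg_le_of_abs_le (hK m hm)
    _ = log (mertensProduct m ^ m * (exp eulerMascheroniConstant * log m) ^ m) := by
        rw [← log_pow, mul_pow]
    _ ≤ log (admDensity m * (exp eulerMascheroniConstant * log m) ^ m) := by
        gcongr; exact mertensProduct_pow_le_admDensity m

theorem log_admDensity_mul_le_of_le {n m : ℕ} (hn : 2 ≤ n) (hnm : n ≤ m) :
    log (admDensity m * (exp eulerMascheroniConstant * log m) ^ m) ≤
      n * log 4 + m * (log (mertensProduct n * (exp eulerMascheroniConstant * log n)) +
        (log (log m) - log (log n))) := by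
  have hlogn : 0 < log n := log_pos (by exact_mod_cast hn)
  have hlogm : 0 < log m := log_pos (by exact_mod_cast hn.trans hnm)
  have hpos := mertensProduct_pos n
  have hprim : (0 : ℝ) < primorial n := by exact_mod_cast primorial_pos n
  have hadm := admDensity_pos m
  calc log (admDensity m * (exp eulerMascheroniConstant * log m) ^ m)
      ≤ log (primorial n * mertensProduct n ^ m * (exp eulerMascheroniConstant * log m) ^ m) := by
        gcongr; exact admDensity_le_primorial_mul_mertensProduct_pow hnm
    _ = log (primorial n) + m * log (mertensProduct n * (exp eulerMascheroniConstant * log m)) := by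
        rw [mul_assoc, ← mul_pow, log_mul hprim.ne' (by positivity), log_pow]
    _ = log (primorial n) + m * (log (mertensProduct n * (exp eulerMascheroniConstant * log n)) +
          (log (log m) - log (log n))) := by
        rw [← log_div hlogm.ne' hlogn.ne', ← log_mul (by positivity) (by positivity)]
        congr 3
        field_simp
    _ ≤ _ := by gcongr; exact log_primorial_le n

theorem exists_log_admDensity_mul_le : ∃ K : ℝ, 0 ≤ K ∧ ∀ m : ℕ, 3 ≤ m →
    log (admDensity m * (exp eulerMascheroniConstant * log m) ^ m) ≤
      K * (m / log m) + 2 * (m * log (log m) / log m) := by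
  obtain ⟨K, hK⟩ := mertens_third
  refine ⟨2 * log 4 + 2 * |K|, by positivity, fun m hm => ?_⟩
  have hm' : (3 : ℝ) ≤ m := by exact_mod_cast hm
  have hlog : 1 < log m := one_lt_log_of_three_le hm'
  set n := ⌈(m : ℝ) / log m⌉₊
  have hdiv : 1 < m / log m := one_lt_div_log (by linarith)
  have hn : 2 ≤ n := Nat.lt_ceil.2 (by rwa [Nat.cast_one])
  have hnm : n ≤ m := Nat.ceil_le.2 (div_le_self m.cast_nonneg hlog.le)
  have hle : (m : ℝ) / log m ≤ n := Nat.le_ceil _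
  have hmertens : log (mertensProduct n * (exp eulerMascheroniConstant * log n)) ≤
      2 * |K| / log m :=
    calc log (mertensProduct n * (exp eulerMascheroniConstant * log n))
        ≤ K / log n := (le_abs_self _).trans (hK n hn)
      _ ≤ |K| / (log m / 2) := by
          gcongr
          · exact le_abs_self K
          · exact half_log_le_log_of_div_log_le (by linarith) hle
      _ = 2 * |K| / log m := by field_simp
  calc log (admDensity m * (exp eulerMascheroniConstant * log m) ^ m)
      ≤ n * log 4 + m * (log (mertensProduct n * (exp eulerMascheroniConstant * log n)) +
          (log (log m) - log (log n))) := log_admDensity_mul_le_of_le hn hnm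
    _ ≤ 2 * (m / log m) * log 4 + m * (2 * |K| / log m + 2 * log (log m) / log m) := by
        gcongr
        · exact Nat.ceil_le_two_mul (by linarith)
        · exact log_log_sub_log_log_le_of_div_log_le hm' hle
    _ = (2 * log 4 + 2 * |K|) * (m / log m) + 2 * (m * log (log m) / log m) := by ring

theorem exists_mul_div_log_le_mul_log_log {K : ℝ} (hK : 0 ≤ K) : ∃ C : ℝ, 0 ≤ C ∧
    ∀ x : ℝ, 3 ≤ x → K * (x / log x) ≤ C * (x * log (log x) / log x) := by
  have hlog3 : 0 < log (log 3) := log_pos (one_lt_log_of_three_le le_rfl)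
  refine ⟨K / log (log 3), by positivity, fun x hx => ?_⟩
  have hlogx : 1 < log x := one_lt_log_of_three_le hx
  have hmono : log (log 3) ≤ log (log x) := by
    have := one_lt_log_of_three_le le_rfl
    gcongr
  calc K * (x / log x) = K / log (log 3) * (x * log (log 3) / log x) := by field_simp
    _ ≤ K / log (log 3) * (x * log (log x) / log x) := by gcongr

theorem exists_abs_log_admDensity_mul_le : ∃ C : ℝ, 0 < C ∧ ∀ m : ℕ, 3 ≤ m →
    |log (admDensity m * (exp eulerMascheroniConstant * log m) ^ m)| ≤
      C * m * log (log m) / log m := by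
  obtain ⟨K, hK, hlower⟩ := exists_neg_mul_div_log_le_log_admDensity_mul
  obtain ⟨K', hK', hupper⟩ := exists_log_admDensity_mul_le
  obtain ⟨C, hC, hlower'⟩ := exists_mul_div_log_le_mul_log_log hK
  obtain ⟨C', hC', hupper'⟩ := exists_mul_div_log_le_mul_log_log hK'
  refine ⟨C + C' + 2, by positivity, fun m hm => ?_⟩
  have hm' : (3 : ℝ) ≤ m := by exact_mod_cast hm
  have hlog : 1 < log m := one_lt_log_of_three_le hm'
  have herror : 0 ≤ m * log (log m) / log m := by have := log_pos hlog; positivity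
  have hC_error := mul_nonneg hC herror
  have hC'_error := mul_nonneg hC' herror
  have hexpand : (C + C' + 2) * m * log (log m) / log m = C * (m * log (log m) / log m) +
      C' * (m * log (log m) / log m) + 2 * (m * log (log m) / log m) := by ring
  rw [hexpand, abs_le]
  constructor
  · linarith [hlower m (by lia), hlower' m hm']
  · linarith [hupper m hm, hupper' m hm']

end Bounds

theorem stmt_16 :
    (∀ m : ℕ, 1 ≤ m →
      ∃ L : ℝ, Filter.Tendsto (fun N : ℕ => (admCount m N : ℝ) / (N : ℝ) ^ m)
        Filter.atTop (nhds L)) ∧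
    ∃ C : ℝ, 0 < C ∧ ∀ m : ℕ, 3 ≤ m → ∀ L : ℝ,
      Filter.Tendsto (fun N : ℕ => (admCount m N : ℝ) / (N : ℝ) ^ m)
        Filter.atTop (nhds L) →
      Real.exp (-(C * m * Real.log (Real.log m) / Real.log m)) ≤
          L * (Real.exp Real.eulerMascheroniConstant * Real.log m) ^ m ∧
        L * (Real.exp Real.eulerMascheroniConstant * Real.log m) ^ m ≤
          Real.exp (C * m * Real.log (Real.log m) / Real.log m) := by
  refine ⟨fun m _ => ⟨_, tendsto_admCount_div_pow m⟩, ?_⟩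
  obtain ⟨C, hC, hbound⟩ := exists_abs_log_admDensity_mul_le
  refine ⟨C, hC, fun m hm L hL => ?_⟩
  obtain rfl := tendsto_nhds_unique hL (tendsto_admCount_div_pow m)
  have hlog : 0 < Real.log m := Real.log_pos (by exact_mod_cast (by lia : 1 < m))
  have hpos : 0 < admDensity m * (Real.exp Real.eulerMascheroniConstant * Real.log m) ^ m :=
    mul_pos (admDensity_pos m) (by positivity)
  rw [← Real.le_log_iff_exp_le hpos, ← Real.log_le_iff_le_exp hpos]
  exact abs_le.1 (hbound m hm)
end

section
/- There is an absolute constant C > 0 such that for every integer m ≥ 3 and every prime p ≤ m / log m, |ρ_ad(m,p) / (p · (1 − 1/p)^m) − 1| ≤ C / log m, where ρ_ad(m,p) = p^{−m} · #{(h_1,…,h_m) ∈ (ℤ/pℤ)^m : {h_1,…,h_m} ≠ ℤ/pℤ}. -/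
/-- `ρ_ad(m, p)`: the proportion of `m`-tuples in `(ℤ/pℤ)^m` that do not cover all
residue classes mod `p`. -/
noncomputable def rhoAdP (m p : ℕ) : ℝ :=
  (Nat.card {h : Fin m → ZMod p // ¬ Function.Surjective h} : ℝ) / (p : ℝ) ^ m

/-!
A tuple is admissible iff it lies in the union over the residues `a` of the set of tuples avoiding
`a`. The union bound gives `p (p - 1) ^ m` as an upper bound for the number of admissible tuples,
and the second Bonferroni inequality shows that this is correct up to a relative error of at most
`(p - 1) / 2 * (1 - 1 / (p - 1)) ^ m ≤ (p - 1) / 2 * exp (-m / (p - 1))`. The condition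
`p ≤ m / log m` is what makes the exponential at most `1 / m`.
-/

open Finset

theorem sum_offDiag_insert {ι M : Type*} [DecidableEq ι] [AddCommMonoid M] {s : Finset ι} {a : ι}
    (ha : a ∉ s) (f : ι × ι → M) :
    ∑ x ∈ (insert a s).offDiag, f x =
      ∑ x ∈ s.offDiag, f x + ∑ b ∈ s, f (a, b) + ∑ b ∈ s, f (b, a) := by
  rw [offDiag_insert ha, sum_union (by grind [disjoint_left]), sum_union (by grind [disjoint_left]),
    sum_product, sum_product, sum_singleton]
  simp only [sum_singleton]

/-- The second Bonferroni inequality, doubled because `offDiag` lists every unordered pair twice. -/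
theorem two_mul_sum_card_le_two_mul_card_biUnion_add {ι α : Type*} [DecidableEq α]
    (s : Finset ι) (A : ι → Finset α) :
    2 * ∑ i ∈ s, #(A i) ≤ 2 * #(s.biUnion A) + ∑ x ∈ s.offDiag, #(A x.1 ∩ A x.2) := by
  classical
  induction s using Finset.induction_on with
  | empty => simp
  | insert a s ha ih =>
    have hinter : #(A a ∩ s.biUnion A) ≤ ∑ b ∈ s, #(A a ∩ A b) := by
      rw [inter_biUnion]
      exact card_biUnion_le
    have hunion := card_union_add_card_inter (A a) (s.biUnion A)
    rw [biUnion_insert, sum_insert ha, sum_offDiag_insert ha]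
    simp only [inter_comm _ (A a)]
    linarith

section Counting

variable {ι α : Type*} [Fintype ι] [Fintype α]

variable (ι) in
/-- The set of maps `ι → α` taking no value in `s`. -/
def mapsAvoiding [DecidableEq ι] [DecidableEq α] (s : Finset α) : Finset (ι → α) :=
  Fintype.piFinset fun _ ↦ sᶜ

theorem card_mapsAvoiding [DecidableEq ι] [DecidableEq α] (s : Finset α) :
    #(mapsAvoiding ι s) = (Fintype.card α - #s) ^ Fintype.card ι := by
  rw [mapsAvoiding, Fintype.card_piFinset, prod_const, card_univ, card_compl]

theorem mapsAvoiding_inter_mapsAvoiding [DecidableEq ι] [DecidableEq α] (s t : Finset α) :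
    mapsAvoiding ι s ∩ mapsAvoiding ι t = mapsAvoiding ι (s ∪ t) := by
  simp only [mapsAvoiding, compl_union, Fintype.piFinset_inter]

variable (ι α)

theorem natCard_not_surjective_eq_card_biUnion [DecidableEq ι] [DecidableEq α] :
    Nat.card {h : ι → α // ¬ Function.Surjective h} =
      #(univ.biUnion fun a : α ↦ mapsAvoiding ι {a}) := by
  rw [← Nat.card_eq_finsetCard]
  refine Nat.card_congr (Equiv.subtypeEquivRight fun h ↦ ?_)
  simp [mapsAvoiding, Function.Surjective]

theorem natCard_not_surjective_le :
    Nat.card {h : ι → α // ¬ Function.Surjective h} ≤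
      Fintype.card α * (Fintype.card α - 1) ^ Fintype.card ι := by
  classical
  rw [natCard_not_surjective_eq_card_biUnion]
  refine card_biUnion_le_card_mul _ _ _ fun a _ ↦ ?_
  rw [card_mapsAvoiding, card_singleton]

theorem two_mul_le_two_mul_natCard_not_surjective_add :
    2 * (Fintype.card α * (Fintype.card α - 1) ^ Fintype.card ι) ≤
      2 * Nat.card {h : ι → α // ¬ Function.Surjective h} +
        Fintype.card α * (Fintype.card α - 1) * (Fintype.card α - 2) ^ Fintype.card ι := by
  classical
  have hsingle : ∑ a : α, #(mapsAvoiding ι {a}) =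
      Fintype.card α * (Fintype.card α - 1) ^ Fintype.card ι := by
    simp only [card_mapsAvoiding, card_singleton, sum_const, card_univ, smul_eq_mul]
  have hpair : ∑ x ∈ (univ : Finset α).offDiag, #(mapsAvoiding ι {x.1} ∩ mapsAvoiding ι {x.2}) =
      Fintype.card α * (Fintype.card α - 1) * (Fintype.card α - 2) ^ Fintype.card ι := by
    have hcard : ∀ x ∈ (univ : Finset α).offDiag,
        #(mapsAvoiding ι {x.1} ∩ mapsAvoiding ι {x.2}) =
          (Fintype.card α - 2) ^ Fintype.card ι := fun x hx ↦ by
      rw [mapsAvoiding_inter_mapsAvoiding, card_mapsAvoiding, ← insert_eq,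
        card_pair (mem_offDiag.1 hx).2.2]
    rw [sum_const_nat hcard, offDiag_card, card_univ, Nat.mul_sub_one]
  rw [natCard_not_surjective_eq_card_biUnion, ← hsingle, ← hpair]
  exact two_mul_sum_card_le_two_mul_card_biUnion_add _ _

end Counting

theorem rhoAdP_div_eq (m : ℕ) {p : ℕ} (hp : p ≠ 0) :
    rhoAdP m p / ((p : ℝ) * (1 - 1 / (p : ℝ)) ^ m) =
      Nat.card {h : Fin m → ZMod p // ¬ Function.Surjective h} / ((p : ℝ) * (p - 1) ^ m) := by
  have hp' : (p : ℝ) ≠ 0 := Nat.cast_ne_zero.2 hp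
  rw [rhoAdP, one_sub_div hp', div_pow]
  field_simp

theorem abs_rhoAdP_div_sub_one_le (m : ℕ) {p : ℕ} (hp : 2 ≤ p) :
    |rhoAdP m p / ((p : ℝ) * (1 - 1 / (p : ℝ)) ^ m) - 1| ≤
      ((p : ℝ) - 1) / 2 * (1 - 1 / ((p : ℝ) - 1)) ^ m := by
  have : NeZero p := ⟨by lia⟩
  have hupper := natCard_not_surjective_le (Fin m) (ZMod p)
  have hlower := two_mul_le_two_mul_natCard_not_surjective_add (Fin m) (ZMod p)
  rw [ZMod.card, Fintype.card_fin] at hupper hlower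
  rw [rhoAdP_div_eq m (NeZero.ne p)]
  generalize Nat.card {h : Fin m → ZMod p // ¬ Function.Surjective h} = N at *
  have hp' : (2 : ℝ) ≤ p := by exact_mod_cast hp
  have hq : 0 < (p : ℝ) - 1 := by linarith
  have hmain : 0 < (p : ℝ) * (p - 1) ^ m := by positivity
  rify [hp, show 1 ≤ p by lia] at hupper hlower
  have herror : (p : ℝ) * (p - 1) ^ m * (((p : ℝ) - 1) / 2 * (1 - 1 / ((p : ℝ) - 1)) ^ m) =
      p * (p - 1) * (p - 2) ^ m / 2 := by
    rw [one_sub_div hq.ne', div_pow, show (p : ℝ) - 1 - 1 = p - 2 by ring]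
    field_simp
  rw [div_sub_one hmain.ne', abs_div, abs_of_pos hmain, div_le_iff₀' hmain, herror, abs_le]
  constructor <;> linarith

theorem one_sub_one_div_pow_le_exp {x : ℝ} (hx : 1 ≤ x) (m : ℕ) :
    (1 - 1 / x) ^ m ≤ Real.exp (-(m / x)) := by
  have hx' : 0 ≤ 1 - 1 / x := sub_nonneg.2 ((div_le_one (by linarith)).2 hx)
  calc (1 - 1 / x) ^ m ≤ Real.exp (-(1 / x)) ^ m := by
        gcongr
        exact Real.one_sub_le_exp_neg _
    _ = Real.exp (-(m / x)) := by
        rw [← Real.exp_nat_mul]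
        ring_nf

theorem mul_exp_neg_div_le_one_div_log {x y : ℝ} (hx : 0 < x) (hy : 1 < y)
    (hxy : x ≤ y / Real.log y) : x * Real.exp (-(y / x)) ≤ 1 / Real.log y := by
  have hlog : 0 < Real.log y := Real.log_pos hy
  have hy₀ : 0 < y := by linarith
  have hexp : Real.exp (-(y / x)) ≤ 1 / y := by
    rw [Real.exp_neg, ← one_div]
    gcongr
    rw [← Real.log_le_iff_le_exp hy₀]
    exact (le_div_comm₀ hx hlog).1 hxy
  calc x * Real.exp (-(y / x)) ≤ y / Real.log y * (1 / y) := by gcongr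
    _ = 1 / Real.log y := by field_simp

theorem stmt_18_general {m p : ℕ} (hm : 2 ≤ m) (hp : 2 ≤ p) (hpm : (p : ℝ) ≤ m / Real.log m) :
    |rhoAdP m p / ((p : ℝ) * (1 - 1 / (p : ℝ)) ^ m) - 1| ≤ 1 / 2 / Real.log m := by
  have hm' : (1 : ℝ) < m := by exact_mod_cast hm
  have hp' : (2 : ℝ) ≤ p := by exact_mod_cast hp
  have hq : 1 ≤ (p : ℝ) - 1 := by linarith
  calc |rhoAdP m p / ((p : ℝ) * (1 - 1 / (p : ℝ)) ^ m) - 1|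
      ≤ ((p : ℝ) - 1) / 2 * (1 - 1 / ((p : ℝ) - 1)) ^ m := abs_rhoAdP_div_sub_one_le m hp
    _ ≤ ((p : ℝ) - 1) / 2 * Real.exp (-(m / ((p : ℝ) - 1))) := by
        gcongr
        exact one_sub_one_div_pow_le_exp hq m
    _ = 1 / 2 * (((p : ℝ) - 1) * Real.exp (-(m / ((p : ℝ) - 1)))) := by ring
    _ ≤ 1 / 2 * (1 / Real.log m) := by
        gcongr
        exact mul_exp_neg_div_le_one_div_log (by linarith) hm' (by linarith)
    _ = 1 / 2 / Real.log m := by ring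

theorem stmt_18 : ∃ C : ℝ, 0 < C ∧ ∀ m p : ℕ, 3 ≤ m → p.Prime →
    (p : ℝ) ≤ m / Real.log m →
    |rhoAdP m p / ((p : ℝ) * (1 - 1 / (p : ℝ)) ^ m) - 1| ≤ C / Real.log m :=
  ⟨1 / 2, by norm_num, fun _ _ hm hp hpm ↦ stmt_18_general (by lia) hp.two_le hpm⟩
end

section
/- There is an absolute constant C > 0 such that for every integer m ≥ 1 and every integer k with m ≤ k ≤ e^{4m}, one has δ(m,k) ≥ e^{−C m²}. -/
open Filter Real

/-- An `(m,k)`-plausible set: translation invariant, permutation invariant, and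
every admissible `k`-tuple of distinct integers contains an `m`-subtuple lying in `A`. -/
def Plausible (m k : ℕ) (A : Set (Fin m → ℤ)) : Prop :=
  (∀ h ∈ A, ∀ t : ℤ, (fun i => h i + t) ∈ A) ∧
  (∀ h ∈ A, ∀ σ : Equiv.Perm (Fin m), (h ∘ σ) ∈ A) ∧
  (∀ x : Fin k → ℤ, Function.Injective x → AdmissibleTuple x →
    ∃ f : Fin m → Fin k, Function.Injective f ∧ (x ∘ f) ∈ A)

/-- The number of points of `A` in the box `[-N, N]^m`. -/
noncomputable def boxCount (m : ℕ) (A : Set (Fin m → ℤ)) (N : ℕ) : ℕ :=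
  Nat.card {h : Fin m → ℤ // h ∈ A ∧ ∀ i, |h i| ≤ (N : ℤ)}

/-- The liminf density of `A ⊆ ℤ^m` in boxes `[-N, N]^m`. -/
noncomputable def lowerBoxDensity (m : ℕ) (A : Set (Fin m → ℤ)) : ℝ :=
  Filter.liminf (fun N : ℕ => (boxCount m A N : ℝ) / (2 * N) ^ m) Filter.atTop

/-- `δ(m,k)`: the infimum over `(m,k)`-plausible sets `A` of the liminf density of `A`. -/
noncomputable def delta (m k : ℕ) : ℝ :=
  sInf { d : ℝ | ∃ A : Set (Fin m → ℤ), Plausible m k A ∧ d = lowerBoxDensity m A }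

/-!
The integers coprime to the primorial `k#` have density `φ(k#) / k# ≥ 1 / k`, by the telescoping
product `∏ (1 - 1/j)`, and any `k` of them form an admissible tuple: a prime `p ≤ k` leaves the
class `0` free, a larger one has more than `k` classes. Cut those in `[0, N)` into `k` disjoint
blocks of `q ≳ N / k ^ 2` elements. Every one of the `q ^ k` ways to choose one element from each
block contains an `m`-subtuple in a plausible set `A`. As there are at most `k ^ m` position
patterns, and an `m`-tuple at a given pattern lies in `q ^ (k - m)` choices, the box contains at
least `(q / k) ^ m ≳ (N / k ^ 3) ^ m` points of `A`.
-/

section Patterns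

open Finset

variable {ι κ T : Type*} [Fintype ι] [Fintype κ] [Fintype T]

theorem card_filter_comp_mem_mul [DecidableEq κ] [DecidableEq T] (f : ι ↪ κ) (B : Finset (ι → T)) :
    #{y : κ → T | y ∘ f ∈ B} * Fintype.card T ^ Fintype.card ι =
      #B * Fintype.card T ^ Fintype.card κ := by
  classical
  have extend_comp (h : ι → T) (y : κ → T) : Function.extend f h y ∘ f = h :=
    Function.extend_comp f.injective h y
  have extend_extend (h : ι → T) (y : κ → T) :
      Function.extend f (y ∘ f) (Function.extend f h y) = y := by
    funext b
    by_cases hb : ∃ a, f a = b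
    · obtain ⟨a, rfl⟩ := hb
      simp [f.injective.extend_apply]
    · simp [Function.extend_apply' _ _ _ hb]
  -- Exchanging `h` with the restriction of `y` along `f` gives a count free of subtraction.
  let swap : (κ → T) × (ι → T) ≃ (ι → T) × (κ → T) :=
    { toFun := fun (y, h) => (y ∘ f, Function.extend f h y)
      invFun := fun (h, y) => (Function.extend f h y, y ∘ f)
      left_inv := fun (y, h) => by simp [extend_extend, extend_comp]
      right_inv := fun (h, y) => by simp [extend_extend, extend_comp] }
  have card_product_eq :
      #((univ.filter fun y : κ → T => y ∘ f ∈ B) ×ˢ (univ : Finset (ι → T))) =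
        #(B ×ˢ (univ : Finset (κ → T))) :=
    card_equiv swap fun _ => by simp [swap]
  simpa using card_product_eq

theorem card_pow_le_sum_card_of_forall_exists_comp_mem [Nonempty T]
    {B : (ι ↪ κ) → Finset (ι → T)} (hB : ∀ y : κ → T, ∃ f, y ∘ f ∈ B f) :
    Fintype.card T ^ Fintype.card ι ≤ ∑ f, #(B f) := by
  classical
  let choices (f : ι ↪ κ) : Finset (κ → T) := {y | y ∘ f ∈ B f}
  have choices_cover : univ ⊆ univ.biUnion choices := fun y _ => by simpa [choices] using hB y
  have double_count : Fintype.card T ^ Fintype.card ι * Fintype.card T ^ Fintype.card κ ≤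
      (∑ f, #(B f)) * Fintype.card T ^ Fintype.card κ :=
    calc Fintype.card T ^ Fintype.card ι * Fintype.card T ^ Fintype.card κ
        = #(univ : Finset (κ → T)) * Fintype.card T ^ Fintype.card ι := by simp [mul_comm]
      _ ≤ (∑ f, #(choices f)) * Fintype.card T ^ Fintype.card ι := by
        gcongr
        exact (card_le_card choices_cover).trans card_biUnion_le
      _ = (∑ f, #(B f)) * Fintype.card T ^ Fintype.card κ := by
        simp only [sum_mul]
        exact sum_congr rfl fun f _ => card_filter_comp_mem_mul f (B f)
  exact Nat.le_of_mul_le_mul_right double_count (pow_pos Fintype.card_pos _)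

end Patterns

theorem primorial_le_mul_totient_primorial {k : ℕ} (hk : 1 ≤ k) :
    primorial k ≤ k * (primorial k).totient := by
  induction k, hk using Nat.le_induction with
  | base => simp
  | succ n _ ih =>
    by_cases hp : (n + 1).Prime
    · have primorial_succ : primorial (n + 1) = (n + 1) * primorial n := by
        simp [primorial, Finset.range_add_one (n := n + 1), Finset.filter_insert, hp]
      calc primorial (n + 1) = (n + 1) * primorial n := primorial_succ
        _ ≤ (n + 1) * (n * (primorial n).totient) := by gcongr
        _ = (n + 1) * ((n + 1).totient * (primorial n).totient) := by
          rw [Nat.totient_prime hp, Nat.add_sub_cancel]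
        _ ≤ (n + 1) * (primorial (n + 1)).totient := by
          rw [primorial_succ]
          gcongr
          exact Nat.totient_super_multiplicative _ _
    · have primorial_succ : primorial (n + 1) = primorial n := by
        simp [primorial, Finset.range_add_one (n := n + 1), Finset.filter_insert, hp]
      rw [primorial_succ]
      exact ih.trans (Nat.mul_le_mul_right _ n.le_succ)

theorem count_coprime_mul (P n : ℕ) : Nat.count P.Coprime (n * P) = n * P.totient := by
  induction n with
  | zero => simp
  | succ n ih =>
    have count_period : Nat.count (fun a => P.Coprime (n * P + a)) P = P.totient := by
      simp [Nat.count_eq_card_filter_range, Nat.totient]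
    rw [Nat.succ_mul, Nat.count_add, ih, count_period, Nat.succ_mul]

theorem admissibleTuple_of_forall_prime_le {k : ℕ} {x : Fin k → ℤ}
    (hx : ∀ p ≤ k, p.Prime → ∃ r : ZMod p, ∀ i, (x i : ZMod p) ≠ r) : AdmissibleTuple x := by
  intro p hp
  rcases le_or_gt p k with hpk | hkp
  · exact hx p hpk hp
  · have : NeZero p := ⟨hp.ne_zero⟩
    by_contra! hsurj
    have card_le : p ≤ k := by
      simpa using Fintype.card_le_of_surjective (fun i => (x i : ZMod p)) hsurj
    omega

theorem admissibleTuple_of_isCoprime_primorial {k : ℕ} {x : Fin k → ℤ}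
    (hx : ∀ i, IsCoprime (x i) (primorial k)) : AdmissibleTuple x := by
  refine admissibleTuple_of_forall_prime_le fun p hpk hp => ⟨0, fun i hi => ?_⟩
  have dvd_primorial : (p : ℤ) ∣ primorial k :=
    Int.natCast_dvd_natCast.2 (hp.dvd_primorial_iff.2 hpk)
  exact (Nat.prime_iff_prime_int.1 hp).not_isUnit
    ((hx i).isUnit_of_dvd' ((ZMod.intCast_zmod_eq_zero_iff_dvd _ _).1 hi) dvd_primorial)

theorem plausible_univ {m k : ℕ} (hmk : m ≤ k) : Plausible m k Set.univ :=
  ⟨fun _ _ _ => trivial, fun _ _ _ => trivial,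
    fun _ _ _ => ⟨Fin.castLE hmk, Fin.castLE_injective hmk, trivial⟩⟩

theorem boxCount_eq_ncard (m : ℕ) (A : Set (Fin m → ℤ)) (N : ℕ) :
    boxCount m A N = (A ∩ Set.Icc (fun _ => -(N : ℤ)) fun _ => (N : ℤ)).ncard := by
  rw [boxCount, ← Nat.card_coe_set_eq]
  simp only [abs_le, forall_and, Set.Icc, Pi.le_def]
  rfl

theorem boxCount_le (m : ℕ) (A : Set (Fin m → ℤ)) (N : ℕ) : boxCount m A N ≤ (2 * N + 1) ^ m := by
  have card_Icc : (Finset.Icc (-(N : ℤ)) N).card = 2 * N + 1 := by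
    rw [Int.card_Icc]
    omega
  calc boxCount m A N
      ≤ (Set.Icc (fun _ : Fin m => -(N : ℤ)) fun _ => (N : ℤ)).ncard := by
        rw [boxCount_eq_ncard]
        exact Set.ncard_le_ncard Set.inter_subset_right (Set.finite_Icc _ _)
    _ = (2 * N + 1) ^ m := by
        rw [← Finset.coe_Icc, Set.ncard_coe_finset, Pi.card_Icc, Finset.prod_const, card_Icc,
          Finset.card_univ, Fintype.card_fin]

theorem card_le_boxCount {m N : ℕ} {A : Set (Fin m → ℤ)} (B : Finset (Fin m → ℤ))
    (hBA : ∀ h ∈ B, h ∈ A) (hBN : ∀ h ∈ B, ∀ i, |h i| ≤ (N : ℤ)) : B.card ≤ boxCount m A N := by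
  rw [boxCount_eq_ncard, ← Set.ncard_coe_finset]
  refine Set.ncard_le_ncard (fun h hh => ⟨hBA h hh, ?_⟩) ((Set.finite_Icc _ _).inter_of_right _)
  exact ⟨fun i => (abs_le.1 (hBN h hh i)).1, fun i => (abs_le.1 (hBN h hh i)).2⟩

section Plausible

variable {m k N : ℕ} {A : Set (Fin m → ℤ)}

open Finset in
theorem pow_le_mul_boxCount (hA : Plausible m k A) {S : Finset ℤ}
    (hadm : ∀ x : Fin k → ℤ, (∀ i, x i ∈ S) → AdmissibleTuple x)
    (hSN : ∀ s ∈ S, |s| ≤ (N : ℤ)) {q : ℕ} (hq : 0 < q) (hqS : k * q ≤ #S) :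
    q ^ m ≤ k ^ m * boxCount m A N := by
  classical
  obtain ⟨block⟩ : Nonempty (Fin k × Fin q ↪ S) :=
    Function.Embedding.nonempty_of_card_le (by simpa using hqS)
  let select (f : Fin m ↪ Fin k) (h : Fin m → Fin q) (j : Fin m) : ℤ := block (f j, h j)
  let B (f : Fin m ↪ Fin k) : Finset (Fin m → Fin q) := {h | select f h ∈ A}
  have exists_pattern (y : Fin k → Fin q) : ∃ f : Fin m ↪ Fin k, y ∘ f ∈ B f := by
    have transversal_injective : Function.Injective fun i => (block (i, y i) : ℤ) :=
      Subtype.val_injective.comp (block.injective.comp fun i j hij => congrArg Prod.fst hij)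
    obtain ⟨f, hf, hfA⟩ := hA.2.2 _ transversal_injective (hadm _ fun i => (block (i, y i)).2)
    exact ⟨⟨f, hf⟩, mem_filter.2 ⟨mem_univ _, hfA⟩⟩
  have card_B_le (f : Fin m ↪ Fin k) : #(B f) ≤ boxCount m A N := by
    have select_injective : Function.Injective (select f) := fun h h' hh =>
      funext fun j => congrArg Prod.snd (block.injective (Subtype.ext (congrFun hh j)))
    rw [← card_image_of_injective _ select_injective]
    refine card_le_boxCount _ ?_ ?_ <;> simp only [forall_mem_image]
    · exact fun h hh => (mem_filter.1 hh).2
    · exact fun h _ j => hSN _ (block (f j, h j)).2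
  have : Nonempty (Fin q) := ⟨⟨0, hq⟩⟩
  calc q ^ m ≤ ∑ f, #(B f) := by
        simpa using card_pow_le_sum_card_of_forall_exists_comp_mem exists_pattern
    _ ≤ ∑ _f : Fin m ↪ Fin k, boxCount m A N := sum_le_sum fun f _ => card_B_le f
    _ = k.descFactorial m * boxCount m A N := by simp
    _ ≤ k ^ m * boxCount m A N := Nat.mul_le_mul_right _ (k.descFactorial_le_pow m)

theorem pow_mul_totient_le_mul_boxCount (hA : Plausible m k A) {Q : ℕ} (hQ : 0 < Q)
    (hN : k * Q * primorial k ≤ N) :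
    (Q * (primorial k).totient) ^ m ≤ k ^ m * boxCount m A N := by
  let S : Finset ℤ := ((Finset.range (k * Q * primorial k)).filter (primorial k).Coprime).map
    Nat.castEmbedding
  have mem_S {s : ℤ} (hs : s ∈ S) :
      ∃ a : ℕ, a < k * Q * primorial k ∧ (primorial k).Coprime a ∧ (a : ℤ) = s := by
    simpa [S, and_assoc] using hs
  refine pow_le_mul_boxCount (S := S) hA ?_ ?_ ?_ ?_
  · refine fun x hx => admissibleTuple_of_isCoprime_primorial fun i => ?_
    obtain ⟨a, -, ha, hax⟩ := mem_S (hx i)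
    rw [← hax]
    exact Nat.isCoprime_iff_coprime.2 ha.symm
  · intro s hs
    obtain ⟨a, ha, -, rfl⟩ := mem_S hs
    rw [Nat.abs_cast]
    exact_mod_cast ha.le.trans hN
  · exact Nat.mul_pos hQ (Nat.totient_pos.2 (primorial_pos k))
  · rw [Finset.card_map, ← Nat.count_eq_card_filter_range, count_coprime_mul, mul_assoc]

theorem pow_le_two_mul_cube_pow_mul_boxCount (hA : Plausible m k A) (hk : 1 ≤ k)
    (hN : k * primorial k ≤ N) : N ^ m ≤ (2 * k ^ 3) ^ m * boxCount m A N := by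
  have period_pos : 0 < k * primorial k := Nat.mul_pos hk (primorial_pos k)
  set Q := N / (k * primorial k)
  have Q_pos : 0 < Q := Nat.div_pos hN period_pos
  have le_N : k * Q * primorial k ≤ N := by
    rw [mul_right_comm]
    exact Nat.mul_div_le N _
  have N_le : N ≤ 2 * k ^ 2 * (Q * (primorial k).totient) :=
    calc N ≤ k * primorial k * (Q + 1) := (Nat.lt_mul_div_succ N period_pos).le
      _ ≤ k * (k * (primorial k).totient) * (2 * Q) := by
        gcongr
        · exact primorial_le_mul_totient_primorial hk
        · omega
      _ = 2 * k ^ 2 * (Q * (primorial k).totient) := by ring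
  calc N ^ m ≤ (2 * k ^ 2 * (Q * (primorial k).totient)) ^ m := by gcongr
    _ = (2 * k ^ 2) ^ m * (Q * (primorial k).totient) ^ m := mul_pow _ _ _
    _ ≤ (2 * k ^ 2) ^ m * (k ^ m * boxCount m A N) := by
      gcongr
      exact pow_mul_totient_le_mul_boxCount hA Q_pos le_N
    _ = (2 * k ^ 3) ^ m * boxCount m A N := by
      rw [← mul_assoc, ← mul_pow]
      ring

theorem one_div_pow_le_boxCount_div (hA : Plausible m k A) (hk : 1 ≤ k)
    (hN : k * primorial k ≤ N) :
    (1 / (4 * (k : ℝ) ^ 3)) ^ m ≤ (boxCount m A N : ℝ) / (2 * N) ^ m := by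
  have N_pos : 0 < N := (Nat.mul_pos hk (primorial_pos k)).trans_le hN
  have key : (N : ℝ) ^ m ≤ (2 * (k : ℝ) ^ 3) ^ m * boxCount m A N := by
    exact_mod_cast pow_le_two_mul_cube_pow_mul_boxCount hA hk hN
  rw [le_div_iff₀ (by positivity), ← mul_pow]
  calc (1 / (4 * (k : ℝ) ^ 3) * (2 * (N : ℝ))) ^ m
      = (N : ℝ) ^ m / (2 * (k : ℝ) ^ 3) ^ m := by
        rw [← div_pow]
        congr 1
        field_simp
        norm_num
    _ ≤ (boxCount m A N : ℝ) := (div_le_iff₀' (by positivity)).2 key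

end Plausible

theorem boxCount_div_le {m N : ℕ} (A : Set (Fin m → ℤ)) (hN : 1 ≤ N) :
    (boxCount m A N : ℝ) / (2 * N) ^ m ≤ 2 ^ m := by
  have one_le_N : (1 : ℝ) ≤ N := by exact_mod_cast hN
  rw [div_le_iff₀ (by positivity), ← mul_pow]
  calc (boxCount m A N : ℝ) ≤ (2 * N + 1) ^ m := by exact_mod_cast boxCount_le m A N
    _ ≤ (2 * (2 * N)) ^ m := by
      gcongr
      linarith

theorem le_lowerBoxDensity {m : ℕ} {A : Set (Fin m → ℤ)} {d : ℝ}
    (hd : ∀ᶠ N : ℕ in atTop, d ≤ (boxCount m A N : ℝ) / (2 * N) ^ m) : d ≤ lowerBoxDensity m A :=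
  le_liminf_of_le
    (isCoboundedUnder_ge_of_eventually_le _ <|
      (eventually_ge_atTop 1).mono fun _ hN => boxCount_div_le A hN) hd

theorem one_div_pow_le_delta {m k : ℕ} (hk : 1 ≤ k) (hmk : m ≤ k) :
    (1 / (4 * (k : ℝ) ^ 3)) ^ m ≤ delta m k := by
  refine le_csInf ⟨_, Set.univ, plausible_univ hmk, rfl⟩ ?_
  rintro _ ⟨A, hA, rfl⟩
  refine le_lowerBoxDensity ?_
  filter_upwards [eventually_ge_atTop (k * primorial k)] with N hN
  exact one_div_pow_le_boxCount_div hA hk hN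

theorem exp_neg_le_one_div_four_mul_cube {x t : ℝ} (hx : 0 < x) (ht : 1 ≤ t)
    (hxt : x ≤ Real.exp (4 * t)) : Real.exp (-15 * t) ≤ 1 / (4 * x ^ 3) := by
  have four_le : 4 ≤ Real.exp (3 * t) := by linarith [Real.add_one_le_exp (3 * t)]
  rw [neg_mul, Real.exp_neg, ← one_div]
  refine one_div_le_one_div_of_le (by positivity) ?_
  calc 4 * x ^ 3 ≤ Real.exp (3 * t) * Real.exp (4 * t) ^ 3 := by gcongr
    _ = Real.exp (15 * t) := by
      rw [← Real.exp_nat_mul, ← Real.exp_add]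
      ring_nf

theorem stmt_19 : ∃ C : ℝ, 0 < C ∧ ∀ m k : ℕ, 1 ≤ m → m ≤ k →
    (k : ℝ) ≤ Real.exp (4 * m) → Real.exp (-C * m ^ 2) ≤ delta m k := by
  refine ⟨15, by norm_num, fun m k hm hmk hk => ?_⟩
  have one_le_k : 1 ≤ k := hm.trans hmk
  calc Real.exp (-15 * m ^ 2) = Real.exp (-15 * m) ^ m := by
        rw [← Real.exp_nat_mul]
        ring_nf
    _ ≤ (1 / (4 * (k : ℝ) ^ 3)) ^ m := by
        gcongr
        exact exp_neg_le_one_div_four_mul_cube (by exact_mod_cast one_le_k)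
          (by exact_mod_cast hm) hk
    _ ≤ delta m k := one_div_pow_le_delta one_le_k hmk
end
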